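/- arXiv:2410.23440 — 8 statements merged into one kernel-verified Lean document; each statement's English description precedes it below -/
import Mathlib

section
/- Let λ = (λ_i)_{i≥1} be a nonincreasing sequence of positive real numbers, let u_γ := (1 + Σ_{i≥1} γ_i/λ_i)^{-1/2} for every multi-index γ ∈ Γ, and let π be a bijection from the positive integers onto Γ such that u_{π(1)} ≥ u_{π(2)} ≥ ⋯. Then for every positive integer p there exists s̄ ∈ ℕ (depending on λ_1,…,λ_p and p) such that for all s ≥ s̄ one has u_{π(s+1)} ≥ C · s^{-1/(2p)}, where C = (1/2)·(∏_{i=1}^p λ_i/i)^{1/(2p)}. In particular, (u_{π(s+1)})_s cannot decay with any algebraic rate as s → ∞. -/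
open Finset

/-- The set of multi-indices: finitely supported sequences of nonnegative
integers indexed by the positive integers. -/
abbrev MultiIndex : Type := ℕ+ →₀ ℕ

/-- The weight `u_γ = (1 + ∑_{i ≥ 1} γ_i / λ_i)^{-1/2}` associated to a
multi-index `γ` and a sequence `λ` of positive reals. -/
noncomputable def uweight (lam : ℕ+ → ℝ) (γ : MultiIndex) : ℝ :=
  (1 + ∑ i ∈ γ.support, (γ i : ℝ) / lam i) ^ (-(1 : ℝ) / 2)

/-!
The multi-indices `γ` supported in a set `I` of `n` indices with `γ i ≤ λ i * T / n` for `i ∈ I`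
satisfy `∑ γ i / λ i ≤ T`, and there are more than `∏ λ i * (T / n) ^ n` of them. Since
`n ^ n ≤ 3 ^ n * n !`, this exceeds `s` when `T = 3 * (s / P) ^ (1 / n)` with `P = ∏ λ i / n !`.
Hence one of these multi-indices comes after position `s` in the rearrangement. Its weight is at
least `(1 + T) ^ (-1 / 2)`, which for `s ≥ P` is at least `(4 * (s / P) ^ (1 / n)) ^ (-1 / 2)`.
-/

open scoped Nat

section Box

variable {ι K : Type*} [Field K] [LinearOrder K] [IsStrictOrderedRing K] [FloorSemiring K]
  {I : Finset ι} {b w : ι → K}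

/-- The box of multi-indices `γ` supported in `I` with `γ i ≤ b i` for all `i ∈ I`, whose lattice
points are counted to bound the number of multi-indices of small weight. A negative bound `b i` acts
like `0`. -/
noncomputable def multiIndexBox (I : Finset ι) (b : ι → K) : Finset (ι →₀ ℕ) :=
  I.finsupp fun i => Iic ⌊b i⌋₊

theorem prod_lt_card_multiIndexBox (hI : I.Nonempty) (hb : ∀ i ∈ I, 0 < b i) :
    ∏ i ∈ I, b i < #(multiIndexBox I b) := by
  simp only [multiIndexBox, card_finsupp, Nat.card_Iic, Nat.cast_prod, Nat.cast_add, Nat.cast_one]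
  exact prod_lt_prod_of_nonempty hb (fun i _ => Nat.lt_floor_add_one (b i)) hI

theorem weight_le_sum_of_mem_multiIndexBox (hb : ∀ i ∈ I, 0 ≤ b i) (hw : ∀ i ∈ I, 0 ≤ w i)
    {γ : ι →₀ ℕ} (hγ : γ ∈ multiIndexBox I b) :
    Finsupp.weight w γ ≤ ∑ i ∈ I, b i * w i := by
  obtain ⟨hsupp, hle⟩ := mem_finsupp_iff.1 hγ
  rw [Finsupp.weight_apply, Finsupp.sum_of_support_subset γ hsupp _ fun i _ => zero_nsmul (w i)]
  refine sum_le_sum fun i hi => ?_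
  rw [nsmul_eq_mul]
  exact mul_le_mul_of_nonneg_right ((Nat.le_floor_iff (hb i hi)).1 (mem_Iic.1 (hle i hi))) (hw i hi)

end Box

theorem pow_self_le_three_pow_mul_factorial (n : ℕ) : (n : ℝ) ^ n ≤ 3 ^ n * n ! := by
  have hexp : (n : ℝ) ^ n / n ! ≤ Real.exp n := Real.pow_div_factorial_le_exp n n.cast_nonneg n
  calc (n : ℝ) ^ n ≤ Real.exp n * n ! := (div_le_iff₀ (by positivity)).1 hexp
    _ = Real.exp 1 ^ n * n ! := by rw [Real.exp_one_pow]
    _ ≤ 3 ^ n * n ! := by gcongr; exact Real.exp_one_lt_three.le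

theorem exists_lt_card_forall_weight_inv_le {ι : Type*} {lam : ι → ℝ} {I : Finset ι}
    (hI : I.Nonempty) (hpos : ∀ i ∈ I, 0 < lam i) {x : ℝ} (hx : 0 < x) :
    ∃ B : Finset (ι →₀ ℕ), (∏ i ∈ I, lam i) / (#I)! * x ^ #I < #B ∧
      ∀ γ ∈ B, Finsupp.weight lam⁻¹ γ ≤ 3 * x := by
  have hn : (0 : ℝ) < #I := mod_cast hI.card_pos
  have hb : ∀ i ∈ I, 0 < lam i * (3 * x / #I) := fun i hi => mul_pos (hpos i hi) (by positivity)
  refine ⟨multiIndexBox I fun i => lam i * (3 * x / #I), ?_, fun γ hγ => ?_⟩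
  · have hprod : 0 ≤ ∏ i ∈ I, lam i := prod_nonneg fun i hi => (hpos i hi).le
    have hfact : 1 / ((#I)! : ℝ) ≤ 3 ^ #I / #I ^ #I := by
      rw [div_le_div_iff₀ (by positivity) (by positivity), one_mul]
      exact pow_self_le_three_pow_mul_factorial #I
    calc (∏ i ∈ I, lam i) / (#I)! * x ^ #I
        = (∏ i ∈ I, lam i) * x ^ #I * (1 / (#I)!) := by ring
      _ ≤ (∏ i ∈ I, lam i) * x ^ #I * (3 ^ #I / #I ^ #I) := by gcongr
      _ = ∏ i ∈ I, lam i * (3 * x / #I) := by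
        rw [prod_mul_distrib, prod_const, div_pow, mul_pow]
        ring
      _ < _ := prod_lt_card_multiIndexBox hI hb
  · calc Finsupp.weight lam⁻¹ γ
        ≤ ∑ i ∈ I, lam i * (3 * x / #I) * lam⁻¹ i :=
          weight_le_sum_of_mem_multiIndexBox (fun i hi => (hb i hi).le)
            (fun i hi => (inv_pos.2 (hpos i hi)).le) hγ
      _ = ∑ i ∈ I, 3 * x / #I := sum_congr rfl fun i hi => by
        rw [Pi.inv_apply, mul_comm, inv_mul_cancel_left₀ (hpos i hi).ne']
      _ = 3 * x := by rw [sum_const, nsmul_eq_mul, mul_div_cancel₀ _ hn.ne']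

theorem le_apply_add_one_of_lt_card {α β : Type*} [Preorder β] {u : α → β} {π : ℕ+ → α}
    (hsurj : Function.Surjective π) (hdec : Antitone fun n => u (π n)) {B : Finset α} {c : β}
    (hc : ∀ a ∈ B, c ≤ u a) {s : ℕ+} (hs : s < #B) : c ≤ u (π (s + 1)) := by
  classical
  have hcard : #((Icc 1 s).image π) < #B := by
    calc #((Icc 1 s).image π) ≤ #(Icc 1 s) := card_image_le
      _ = s := by simp
      _ < #B := hs
  obtain ⟨a, haB, ha⟩ := exists_mem_notMem_of_card_lt_card hcard
  obtain ⟨n, rfl⟩ := hsurj a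
  have hn : s < n := not_le.1 fun h => ha (mem_image_of_mem π (mem_Icc.2 ⟨one_le, h⟩))
  exact (hc _ haB).trans (hdec (PNat.add_one_le_iff.2 hn))

theorem uweight_eq_rpow_weight_inv (lam : ℕ+ → ℝ) (γ : MultiIndex) :
    uweight lam γ = (1 + Finsupp.weight lam⁻¹ γ) ^ (-(1 : ℝ) / 2) := by
  simp only [uweight, Finsupp.weight_apply, Finsupp.sum, nsmul_eq_mul, Pi.inv_apply, div_eq_mul_inv]

theorem rpow_le_uweight {lam : ℕ+ → ℝ} (hpos : ∀ i, 0 < lam i) {γ : MultiIndex} {y : ℝ}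
    (hγ : 1 + Finsupp.weight lam⁻¹ γ ≤ y) : y ^ (-(1 : ℝ) / 2) ≤ uweight lam γ := by
  have hnonneg : 0 ≤ Finsupp.weight lam⁻¹ γ :=
    sum_nonneg fun i _ => nsmul_nonneg (inv_pos.2 (hpos i)).le (γ i)
  rw [uweight_eq_rpow_weight_inv]
  exact Real.rpow_le_rpow_of_nonpos (by positivity) hγ (by norm_num)

theorem half_mul_rpow_mul_rpow_neg {P s : ℝ} (hP : 0 ≤ P) (hs : 0 ≤ s) (q : ℝ) :
    1 / 2 * P ^ (1 / (2 * q)) * s ^ (-1 / (2 * q)) = (4 * (s / P) ^ (1 / q)) ^ (-(1 : ℝ) / 2) := by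
  have hfour : (4 : ℝ) ^ (-(1 : ℝ) / 2) = 1 / 2 := by
    rw [show (4 : ℝ) = 2 ^ (2 : ℝ) by norm_num, ← Real.rpow_mul zero_le_two]
    norm_num [Real.rpow_neg_one]
  have hexp : 1 / q * (-1 / 2) = -1 / (2 * q) := by ring
  have hinv : (P ^ (-1 / (2 * q)))⁻¹ = P ^ (1 / (2 * q)) := by
    rw [← Real.rpow_neg hP, neg_div, neg_neg]
  rw [Real.mul_rpow (by norm_num) (by positivity), hfour, ← Real.rpow_mul (by positivity), hexp,
    Real.div_rpow hs hP, ← hinv]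
  ring

theorem prod_Icc_div_coe_eq_prod_div_factorial {K : Type*} [Field K] (f : ℕ+ → K) (p : ℕ+) :
    ∏ i ∈ Icc 1 p, f i / (i : K) = (∏ i ∈ Icc 1 p, f i) / (p : ℕ)! := by
  have hfact : ∏ i ∈ Icc 1 p, (i : ℕ) = (p : ℕ)! := by
    rw [← prod_Ico_id_eq_factorial, Ico_add_one_right_eq_Icc, ← PNat.one_coe,
      ← PNat.map_subtype_embedding_Icc]
    exact (prod_map (Icc 1 p) (Function.Embedding.subtype _) id).symm
  rw [prod_div_distrib, ← hfact, Nat.cast_prod]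

theorem exists_pnat_forall_ge_le_cast (r : ℝ) : ∃ N : ℕ+, ∀ n : ℕ+, N ≤ n → r ≤ n := by
  obtain ⟨N, hN⟩ := exists_nat_ge r
  exact ⟨N.succPNat, fun n hn => hN.trans (mod_cast N.le_succ.trans hn)⟩

theorem impossibility_of_algebraic_decay_general {lam : ℕ+ → ℝ} (hpos : ∀ i, 0 < lam i)
    {π : ℕ+ → MultiIndex} (hsurj : Function.Surjective π)
    (hdec : Antitone fun n => uweight lam (π n)) {I : Finset ℕ+} (hI : I.Nonempty) {s : ℕ+}
    (hs : (∏ i ∈ I, lam i) / (#I)! ≤ s) :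
    (1 / 2 : ℝ) * ((∏ i ∈ I, lam i) / (#I)!) ^ ((1 : ℝ) / (2 * #I)) *
        (s : ℝ) ^ (-(1 : ℝ) / (2 * #I)) ≤ uweight lam (π (s + 1)) := by
  set P : ℝ := (∏ i ∈ I, lam i) / (#I)!
  set x : ℝ := ((s : ℝ) / P) ^ ((1 : ℝ) / #I)
  have hP : 0 < P := div_pos (prod_pos fun i _ => hpos i) (by positivity)
  have hx : 1 ≤ x := Real.one_le_rpow ((one_le_div₀ hP).2 hs) (by positivity)
  have hPx : P * x ^ #I = s := by
    simp only [x]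
    rw [one_div, Real.rpow_inv_natCast_pow (by positivity) hI.card_ne_zero,
      mul_div_cancel₀ _ hP.ne']
  obtain ⟨B, hcard, hweight⟩ :=
    exists_lt_card_forall_weight_inv_le hI (fun i _ => hpos i) (zero_lt_one.trans_le hx)
  rw [half_mul_rpow_mul_rpow_neg hP.le (by positivity)]
  exact le_apply_add_one_of_lt_card hsurj hdec
    (fun γ hγ => rpow_le_uweight hpos (by linarith [hweight γ hγ]))
    (by exact_mod_cast hPx.symm.trans_lt hcard)

/-- **Impossibility of algebraic decay of `u_{π(s+1)}`.**  If `λ` is a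
nonincreasing sequence of positive reals and `π` is a nonincreasing
rearrangement of the weights `u_γ`, then for every `p` there is `s̄` such that
for all `s ≥ s̄` one has `u_{π(s+1)} ≥ (1/2) (∏_{i=1}^p λ_i / i)^{1/(2p)} · s^{-1/(2p)}`. -/
theorem impossibility_of_algebraic_decay
    (lam : ℕ+ → ℝ) (hpos : ∀ i, 0 < lam i) (hanti : Antitone lam)
    (π : ℕ+ → MultiIndex) (hbij : Function.Bijective π)
    (hdec : Antitone fun n => uweight lam (π n))
    (p : ℕ+) :
    ∃ sbar : ℕ+, ∀ s : ℕ+, sbar ≤ s →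
      (1 / 2 : ℝ) * (∏ i ∈ Finset.Icc (1 : ℕ+) p, lam i / (i : ℝ)) ^ ((1 : ℝ) / (2 * (p : ℝ)))
          * (s : ℝ) ^ (-(1 : ℝ) / (2 * (p : ℝ)))
        ≤ uweight lam (π (s + 1)) := by
  rw [prod_Icc_div_coe_eq_prod_div_factorial]
  obtain ⟨sbar, hsbar⟩ := exists_pnat_forall_ge_le_cast ((∏ i ∈ Icc 1 p, lam i) / (p : ℕ)!)
  refine ⟨sbar, fun s hs => ?_⟩
  simpa using impossibility_of_algebraic_decay_general hpos hbij.surjective hdec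
    (I := Icc 1 p) (nonempty_Icc.2 one_le) (by simpa using hsbar s hs)
end

section
/- Let α, β > 0 and λ_i := exp(−α·i^β) for every i ≥ 1, let u_γ := (1 + Σ_{i≥1} γ_i/λ_i)^{-1/2} for γ ∈ Γ, and let π be a bijection from the positive integers onto Γ with u_{π(1)} ≥ u_{π(2)} ≥ ⋯. Then for every δ > 0 there exists s̄ ∈ ℕ (depending on α, β, δ) such that for all s ≥ s̄ one has u_{π(s+1)} ≤ exp( −(1/2) · α^{1/(β+1)} · ((β+1)/(β+δ))^{1/(1+1/β)} · (log s)^{1/(1+1/β)} ). -/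
open Finset

/-!
A multi-index `γ` with `u_γ > T^{-1/2}` satisfies `γ_i ≤ T λ_i` for every `i`. For `T = exp (α x^β)`
this confines `γ` to coordinates `i ≤ x`, with `γ_i ≤ exp (α (x^β - i^β))`, so the number of such
`γ` is at most `∏_{i ≤ x} 2 exp (α (x^β - i^β))`. Comparing `∑ i^β` with an integral and applying
Young's inequality bounds this by `exp (x log 2 + α β/(β+1) x^{β+1})`, hence by
`exp (α (β+δ)/(β+1) x^{β+1})` for large `x`. Equating the last bound with `s` determines `x`, and
then at most `s` weights exceed `T^{-1/2} = exp (-α x^β / 2)`.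
-/

open Filter

lemma rpow_add_one_div_le_sum_rpow {β : ℝ} (hβ : 0 ≤ β) (n : ℕ) :
    (n : ℝ) ^ (β + 1) / (β + 1) ≤ ∑ i ∈ range n, ((i : ℝ) + 1) ^ β := by
  have hmono : MonotoneOn (fun t : ℝ => t ^ β) (Set.Icc 0 (0 + n)) :=
    (Real.monotoneOn_rpow_Ici_of_exponent_nonneg hβ).mono Set.Icc_subset_Ici_self
  simpa [integral_rpow (Or.inl (by linarith : -1 < β)),
    Real.zero_rpow (by linarith : β + 1 ≠ 0)] using hmono.integral_le_sum

lemma sum_rpow_sub_rpow_le {β x : ℝ} (hβ : 0 < β) (hx : 0 ≤ x) (n : ℕ) :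
    ∑ i ∈ range n, (x ^ β - ((i : ℝ) + 1) ^ β) ≤ β / (β + 1) * x ^ (β + 1) := by
  have hconj : (β + 1).HolderConjugate ((β + 1) / β) := by
    rw [Real.holderConjugate_iff_eq_conjExponent (by linarith), add_sub_cancel_right]
  have young := Real.young_inequality_of_nonneg n.cast_nonneg (Real.rpow_nonneg hx β) hconj
  rw [← Real.rpow_mul hx, mul_div_cancel₀ _ hβ.ne'] at young
  have hsum := rpow_add_one_div_le_sum_rpow hβ.le n
  calc ∑ i ∈ range n, (x ^ β - ((i : ℝ) + 1) ^ β)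
      = n * x ^ β - ∑ i ∈ range n, ((i : ℝ) + 1) ^ β := by simp
    _ ≤ x ^ (β + 1) / ((β + 1) / β) := by linarith
    _ = β / (β + 1) * x ^ (β + 1) := by field_simp

lemma card_le_prod_two_mul {ι : Type*} {b : ι → ℝ} {I : Finset ι}
    (hmem : ∀ i ∈ I, 1 ≤ b i) (hnotMem : ∀ i ∉ I, b i < 1)
    {S : Finset (ι →₀ ℕ)} (hS : ∀ γ ∈ S, ∀ i, (γ i : ℝ) ≤ b i) :
    (#S : ℝ) ≤ ∏ i ∈ I, 2 * b i := by
  have hbox : S ⊆ I.finsupp fun i => range (⌊b i⌋₊ + 1) := by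
    refine fun γ hγ => mem_finsupp_iff.2 ⟨fun i hi => ?_, fun i _ => ?_⟩
    · by_contra hiI
      have : γ i < 1 := by exact_mod_cast (hS γ hγ i).trans_lt (hnotMem i hiI)
      exact Finsupp.mem_support_iff.1 hi (by omega)
    · exact mem_range_succ_iff.2 (Nat.le_floor (hS γ hγ i))
  calc (#S : ℝ) ≤ ∏ i ∈ I, ((⌊b i⌋₊ : ℝ) + 1) := by
        simpa using (Nat.cast_le (α := ℝ)).2 (card_le_card hbox)
    _ ≤ ∏ i ∈ I, 2 * b i := prod_le_prod (fun i _ => by positivity) fun i hi => by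
        have hfloor := Nat.floor_le (zero_le_one.trans (hmem i hi))
        linarith [hmem i hi]

lemma card_le_exp_of_le_exp_rpow {α β x : ℝ} (hα : 0 < α) (hβ : 0 < β) (hx : 0 ≤ x)
    {S : Finset MultiIndex}
    (hS : ∀ γ ∈ S, ∀ i : ℕ+, (γ i : ℝ) ≤ Real.exp (α * (x ^ β - (i : ℝ) ^ β))) :
    (#S : ℝ) ≤ Real.exp (x * Real.log 2 + α * (β / (β + 1) * x ^ (β + 1))) := by
  let I : Finset ℕ+ := (range ⌊x⌋₊).map ⟨Nat.succPNat, Nat.succPNat_injective⟩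
  have mem_I (i : ℕ+) : i ∈ I ↔ (i : ℝ) ≤ x := by
    rw [← Nat.le_floor_iff hx]
    simp only [I, Finset.mem_map, mem_range, Function.Embedding.coeFn_mk]
    refine ⟨fun ⟨_, hj, hji⟩ => hji ▸ hj, fun hi => ⟨i.natPred, ?_, i.succPNat_natPred⟩⟩
    exact Nat.lt_of_succ_le (i.natPred_add_one.trans_le hi)
  have hmem : ∀ i ∈ I, 1 ≤ Real.exp (α * (x ^ β - (i : ℝ) ^ β)) := fun i hi =>
    Real.one_le_exp <| mul_nonneg hα.le <| sub_nonneg.2 <|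
      Real.rpow_le_rpow (by positivity) ((mem_I i).1 hi) hβ.le
  have hnotMem : ∀ i ∉ I, Real.exp (α * (x ^ β - (i : ℝ) ^ β)) < 1 := fun i hi =>
    Real.exp_lt_one_iff.2 <| mul_neg_of_pos_of_neg hα <| sub_neg.2 <|
      Real.rpow_lt_rpow hx (not_le.1 (mt (mem_I i).2 hi)) hβ
  have hfloor : (⌊x⌋₊ : ℝ) * Real.log 2 ≤ x * Real.log 2 :=
    mul_le_mul_of_nonneg_right (Nat.floor_le hx) (Real.log_nonneg one_le_two)
  calc (#S : ℝ) ≤ ∏ i ∈ I, 2 * Real.exp (α * (x ^ β - (i : ℝ) ^ β)) :=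
        card_le_prod_two_mul hmem hnotMem hS
    _ = Real.exp (⌊x⌋₊ * Real.log 2
          + α * ∑ i ∈ range ⌊x⌋₊, (x ^ β - ((i : ℝ) + 1) ^ β)) := by
        rw [prod_mul_distrib, prod_const, ← Real.exp_sum, ← mul_sum, Real.exp_add,
          Real.exp_nat_mul, Real.exp_log two_pos]
        simp only [I, card_map, card_range, sum_map, Function.Embedding.coeFn_mk,
          Nat.succPNat_coe, Nat.cast_succ]
    _ ≤ Real.exp (x * Real.log 2 + α * (β / (β + 1) * x ^ (β + 1))) := by
        gcongr
        exact sum_rpow_sub_rpow_le hβ hx _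

lemma apply_add_one_le_of_card_le {Γ R : Type*} [LinearOrder R] {u : Γ → R} {π : ℕ+ → Γ}
    (hinj : Function.Injective π) (hdec : Antitone fun n => u (π n)) {c : R} {s : ℕ+}
    (hcard : ∀ S : Finset Γ, (∀ γ ∈ S, c < u γ) → #S ≤ s) :
    u (π (s + 1)) ≤ c := by
  by_contra! hc
  have h := hcard ((Icc 1 (s + 1)).map ⟨π, hinj⟩) fun γ hγ => by
    obtain ⟨k, hk, rfl⟩ := Finset.mem_map.1 hγ
    exact hc.trans_le (hdec (mem_Icc.1 hk).2)
  simp at h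

lemma le_mul_of_rpow_lt_uweight {lam : ℕ+ → ℝ} (hpos : ∀ i, 0 < lam i) {T : ℝ} (hT : 0 < T)
    {γ : MultiIndex} (hγ : T ^ (-(1 : ℝ) / 2) < uweight lam γ) (i : ℕ+) :
    (γ i : ℝ) ≤ T * lam i := by
  have hterm (j : ℕ+) : 0 ≤ (γ j : ℝ) / lam j := div_nonneg (Nat.cast_nonneg _) (hpos j).le
  have hsum : 0 ≤ ∑ j ∈ γ.support, (γ j : ℝ) / lam j := sum_nonneg fun j _ => hterm j
  have hlt : 1 + ∑ j ∈ γ.support, (γ j : ℝ) / lam j < T :=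
    (Real.rpow_lt_rpow_iff_of_neg hT (by linarith) (by norm_num)).1 hγ
  by_cases hi : i ∈ γ.support
  · have hle := single_le_sum (fun j _ => hterm j) hi
    exact (div_le_iff₀ (hpos i)).1 (by linarith)
  · simpa [Finsupp.notMem_support_iff.1 hi] using (mul_pos hT (hpos i)).le

lemma uweight_add_one_le_exp {α β x : ℝ} (hα : 0 < α) (hβ : 0 < β) (hx : 0 ≤ x)
    {lam : ℕ+ → ℝ} (hpos : ∀ i, 0 < lam i)
    (hlam : ∀ i : ℕ+, lam i ≤ Real.exp (-(α * (i : ℝ) ^ β)))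
    {π : ℕ+ → MultiIndex} (hinj : Function.Injective π)
    (hdec : Antitone fun n => uweight lam (π n)) {s : ℕ+}
    (hs : x * Real.log 2 + α * (β / (β + 1) * x ^ (β + 1)) ≤ Real.log s) :
    uweight lam (π (s + 1)) ≤ Real.exp (-(1 / 2 * (α * x ^ β))) := by
  have hthreshold :
      Real.exp (-(1 / 2 * (α * x ^ β))) = Real.exp (α * x ^ β) ^ (-(1 : ℝ) / 2) := by
    rw [← Real.exp_mul]; ring_nf
  rw [hthreshold]
  refine apply_add_one_le_of_card_le hinj hdec fun S hS => ?_
  have hcoord : ∀ γ ∈ S, ∀ i : ℕ+, (γ i : ℝ) ≤ Real.exp (α * (x ^ β - (i : ℝ) ^ β)) := by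
    intro γ hγ i
    calc (γ i : ℝ) ≤ Real.exp (α * x ^ β) * lam i :=
          le_mul_of_rpow_lt_uweight hpos (Real.exp_pos _) (hS γ hγ) i
      _ ≤ Real.exp (α * x ^ β) * Real.exp (-(α * (i : ℝ) ^ β)) := by gcongr; exact hlam i
      _ = Real.exp (α * (x ^ β - (i : ℝ) ^ β)) := by rw [← Real.exp_add]; ring_nf
  have hcard := (card_le_exp_of_le_exp_rpow hα hβ hx hcoord).trans (Real.exp_le_exp.2 hs)
  rw [Real.exp_log (by positivity)] at hcard
  exact_mod_cast hcard

lemma eventually_mul_log_two_add_le {α β δ : ℝ} (hα : 0 < α) (hβ : 0 < β) (hδ : 0 < δ) :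
    ∀ᶠ x : ℝ in atTop, x * Real.log 2 + α * (β / (β + 1) * x ^ (β + 1))
      ≤ (β + δ) / (β + 1) * (α * x ^ (β + 1)) := by
  filter_upwards [eventually_gt_atTop 0,
    (tendsto_rpow_atTop hβ).eventually_ge_atTop (Real.log 2 / (α * (δ / (β + 1))))] with x hx hlarge
  have hlog : Real.log 2 ≤ x ^ β * (α * (δ / (β + 1))) := (div_le_iff₀ (by positivity)).1 hlarge
  calc x * Real.log 2 + α * (β / (β + 1) * x ^ (β + 1))
      ≤ x * (x ^ β * (α * (δ / (β + 1)))) + α * (β / (β + 1) * x ^ (β + 1)) := by gcongr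
    _ = (β + δ) / (β + 1) * (α * x ^ (β + 1)) := by
        rw [Real.rpow_add_one hx.ne']; ring

/-- The cutoff `x` with `α * x ^ (β + 1) = c * L`: when the `exp L` largest weights are counted,
only the coordinates `i ≤ x` of their multi-indices are taken into account. -/
noncomputable def truncationRadius (α β c L : ℝ) : ℝ :=
  (c * L / α) ^ (1 / (β + 1))

section truncationRadius

variable {α β c L : ℝ}

lemma truncationRadius_nonneg (hα : 0 < α) (hc : 0 < c) (hL : 0 ≤ L) :
    0 ≤ truncationRadius α β c L :=
  Real.rpow_nonneg (by positivity) _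

lemma mul_truncationRadius_rpow_add_one (hα : 0 < α) (hβ : 0 < β) (hc : 0 < c) (hL : 0 ≤ L) :
    α * truncationRadius α β c L ^ (β + 1) = c * L := by
  rw [truncationRadius, ← Real.rpow_mul (by positivity), one_div_mul_cancel (by positivity),
    Real.rpow_one, mul_div_cancel₀ _ hα.ne']

lemma mul_truncationRadius_rpow (hα : 0 < α) (hβ : 0 < β) (hc : 0 < c) (hL : 0 ≤ L) :
    α * truncationRadius α β c L ^ β
      = α ^ (1 / (β + 1)) * c ^ (1 / (1 + 1 / β)) * L ^ (1 / (1 + 1 / β)) := by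
  have hexp : 1 / (β + 1) * β = 1 / (1 + 1 / β) := by field_simp
  have hexp_compl : 1 / (β + 1) = 1 - 1 / (1 + 1 / β) := by field_simp; ring
  rw [truncationRadius, ← Real.rpow_mul (by positivity), hexp, Real.div_rpow (by positivity) hα.le,
    Real.mul_rpow hc.le hL, hexp_compl, Real.rpow_sub hα, Real.rpow_one]
  ring

lemma tendsto_truncationRadius (hα : 0 < α) (hβ : 0 < β) (hc : 0 < c) :
    Tendsto (truncationRadius α β c) atTop atTop :=
  (tendsto_rpow_atTop (by positivity)).comp
    ((tendsto_id.const_mul_atTop hc).atTop_div_const hα)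

end truncationRadius

theorem uweight_decay_exponential_general {α β δ : ℝ} (hα : 0 < α) (hβ : 0 < β) (hδ : 0 < δ) :
    ∃ sbar : ℕ+, ∀ (lam : ℕ+ → ℝ) (π : ℕ+ → MultiIndex), (∀ i, 0 < lam i) →
      (∀ i : ℕ+, lam i ≤ Real.exp (-(α * (i : ℝ) ^ β))) → Function.Injective π →
      (Antitone fun n => uweight lam (π n)) → ∀ s : ℕ+, sbar ≤ s →
      uweight lam (π (s + 1))
        ≤ Real.exp (-(1 / 2 * α ^ ((1 : ℝ) / (β + 1))
            * ((β + 1) / (β + δ)) ^ ((1 : ℝ) / (1 + 1 / β))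
            * (Real.log s) ^ ((1 : ℝ) / (1 + 1 / β)))) := by
  set c := (β + 1) / (β + δ) with hc
  have hc_pos : 0 < c := by positivity
  have hradius : Tendsto (fun s : ℕ => truncationRadius α β c (Real.log s)) atTop atTop :=
    (tendsto_truncationRadius hα hβ hc_pos).comp
      (Real.tendsto_log_atTop.comp tendsto_natCast_atTop_atTop)
  obtain ⟨N, hN⟩ := eventually_atTop.1
    (hradius.eventually (eventually_mul_log_two_add_le hα hβ hδ))
  refine ⟨N.succPNat, fun lam π hpos hlam hinj hdec s hs => ?_⟩
  have hlog : 0 ≤ Real.log s := Real.log_natCast_nonneg s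
  have hcount := hN s (N.le_succ.trans hs)
  rw [mul_truncationRadius_rpow_add_one hα hβ hc_pos hlog, ← inv_div (β + 1) (β + δ), ← hc,
    inv_mul_cancel_left₀ hc_pos.ne'] at hcount
  have hdecay := uweight_add_one_le_exp hα hβ (truncationRadius_nonneg hα hc_pos hlog)
    hpos hlam hinj hdec hcount
  simpa only [mul_truncationRadius_rpow hα hβ hc_pos hlog, mul_assoc] using hdecay

/-- **Decay of `u_{π(s+1)}` for exponential spectral decay `λ_i = e^{-α i^β}`.**
For every `δ > 0` there exists `s̄` such that for all `s ≥ s̄`,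
`u_{π(s+1)} ≤ exp(-(1/2) α^{1/(β+1)} ((β+1)/(β+δ))^{1/(1+1/β)} (log s)^{1/(1+1/β)})`. -/
theorem uweight_decay_exponential
    (α β : ℝ) (hα : 0 < α) (hβ : 0 < β)
    (lam : ℕ+ → ℝ) (hlam : ∀ i : ℕ+, lam i = Real.exp (-(α * (i : ℝ) ^ β)))
    (π : ℕ+ → MultiIndex) (hbij : Function.Bijective π)
    (hdec : Antitone fun n => uweight lam (π n))
    (δ : ℝ) (hδ : 0 < δ) :
    ∃ sbar : ℕ+, ∀ s : ℕ+, sbar ≤ s →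
      uweight lam (π (s + 1))
        ≤ Real.exp (-(1 / 2 * α ^ ((1 : ℝ) / (β + 1))
            * ((β + 1) / (β + δ)) ^ ((1 : ℝ) / (1 + 1 / β))
            * (Real.log s) ^ ((1 : ℝ) / (1 + 1 / β)))) := by
  obtain ⟨sbar, hsbar⟩ := uweight_decay_exponential_general hα hβ hδ
  exact ⟨sbar, hsbar lam π (fun i => hlam i ▸ Real.exp_pos _) (fun i => (hlam i).le) hbij.1 hdec⟩
end

section
/- Let α > 0 and λ_i := exp(−exp(α·i)) for every i ≥ 1, let u_γ := (1 + Σ_{i≥1} γ_i/λ_i)^{-1/2} for γ ∈ Γ, and let π be a bijection from the positive integers onto Γ with u_{π(1)} ≥ u_{π(2)} ≥ ⋯. Then for every δ > 0 and every η > 0 there exists s̄ ∈ ℕ (depending on α, δ, η) such that for all s ≥ s̄ one has u_{π(s+1)} ≤ exp( −η · (log s)^{1/(1+δ)} ). -/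
/-!
A weight of at least `exp (-X / 2)` forces `∑ γ_i / λ_i < exp X`. When `λ_i ≤ exp (-exp (α i))`,
such a `γ` vanishes beyond `i = log X / α` and has entries at most `exp X`, so there are at most
`exp ((X + 1) * log X / α)` of them. If the `(s + 1)`-st largest weight were that big, then
`log s < (X + 1) * log X / α`. For `X = 2 η (log s) ^ (1 / (1 + δ))` the right-hand side is
`o(log s)`, so this fails for large `s`.
-/

open Finset

open Filter Asymptotics

lemma apply_add_one_lt_of_forall_card_le {β R : Type*} [LinearOrder R] {u : β → R} {π : ℕ+ → β}
    (hπ : Function.Injective π) (hdec : Antitone fun n => u (π n)) {c : R} {s : ℕ+}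
    (hcard : ∀ S : Finset β, (∀ b ∈ S, c ≤ u b) → #S ≤ s) : u (π (s + 1)) < c := by
  by_contra! hc
  have hle : #((Icc 1 (s + 1)).map ⟨π, hπ⟩) ≤ s := by
    refine hcard _ fun b hb => ?_
    obtain ⟨n, hn, rfl⟩ := mem_map.1 hb
    exact hc.trans (hdec (mem_Icc.1 hn).2)
  simp at hle

lemma card_le_pow_of_support_subset {ι : Type*} {S : Finset (ι →₀ ℕ)} {I : Finset ι} {M : ℕ}
    (hsupp : ∀ γ ∈ S, γ.support ⊆ I) (hM : ∀ γ ∈ S, ∀ i, γ i ≤ M) : #S ≤ (M + 1) ^ #I := by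
  have hsub : S ⊆ I.finsupp fun _ => Iic M := fun γ hγ =>
    mem_finsupp_iff.2 ⟨hsupp γ hγ, fun i _ => mem_Iic.2 (hM γ hγ i)⟩
  calc #S ≤ #(I.finsupp fun _ => Iic M) := card_le_card hsub
    _ = (M + 1) ^ #I := by simp [card_finsupp]

lemma exists_finset_mem_iff_cast_le (x : ℝ) :
    ∃ I : Finset ℕ+, #I = ⌊x⌋₊ ∧ ∀ i : ℕ+, i ∈ I ↔ (i : ℝ) ≤ x := by
  refine ⟨(range ⌊x⌋₊).map ⟨Nat.succPNat, Nat.succPNat_injective⟩, by simp, fun i => ?_⟩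
  have hpred : i.natPred ∈ range ⌊x⌋₊ ↔ (i : ℕ) ≤ ⌊x⌋₊ := by
    rw [mem_range, ← Nat.succ_le_iff, Nat.succ_eq_add_one, PNat.natPred_add_one]
  rw [← Nat.le_floor_iff' i.ne_zero, ← hpred]
  constructor
  · intro hi
    obtain ⟨k, hk, rfl⟩ := mem_map.1 hi
    simpa using hk
  · exact fun hi => mem_map.2 ⟨i.natPred, hi, PNat.succPNat_natPred i⟩

lemma floor_exp_add_one_le {X : ℝ} (hX : 0 ≤ X) : (⌊Real.exp X⌋₊ : ℝ) + 1 ≤ Real.exp (X + 1) := by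
  have htwo : 2 ≤ Real.exp 1 := by linarith [Real.add_one_le_exp 1]
  calc (⌊Real.exp X⌋₊ : ℝ) + 1 ≤ Real.exp X + Real.exp X :=
        add_le_add (Nat.floor_le (Real.exp_nonneg X)) (Real.one_le_exp hX)
    _ = Real.exp X * 2 := by ring
    _ ≤ Real.exp X * Real.exp 1 := by gcongr
    _ = Real.exp (X + 1) := (Real.exp_add X 1).symm

lemma le_log_div_of_one_le_exp_mul {α l t X : ℝ} (hα : 0 < α)
    (hl : l ≤ Real.exp (-Real.exp (α * t))) (hone : 1 ≤ Real.exp X * l) :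
    t ≤ Real.log X / α := by
  have hexp : 1 ≤ Real.exp (X - Real.exp (α * t)) := by
    rw [sub_eq_add_neg, Real.exp_add]
    exact hone.trans (mul_le_mul_of_nonneg_left hl (Real.exp_nonneg X))
  have hX : Real.exp (α * t) ≤ X := sub_nonneg.1 (Real.one_le_exp_iff.1 hexp)
  rw [le_div_iff₀' hα]
  exact (Real.le_log_iff_exp_le ((Real.exp_pos _).trans_le hX)).2 hX

section Weight

variable {lam : ℕ+ → ℝ} {γ : MultiIndex} {X : ℝ}

lemma exp_neg_div_two_le_uweight_iff (hpos : ∀ i, 0 < lam i) :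
    Real.exp (-X / 2) ≤ uweight lam γ ↔
      1 + ∑ i ∈ γ.support, (γ i : ℝ) / lam i ≤ Real.exp X := by
  have hsum : 0 ≤ ∑ i ∈ γ.support, (γ i : ℝ) / lam i :=
    sum_nonneg fun i _ => div_nonneg (Nat.cast_nonneg _) (hpos i).le
  rw [uweight, show -X / 2 = X * (-1 / 2) by ring, Real.exp_mul]
  exact Real.rpow_le_rpow_iff_of_neg (Real.exp_pos X) (by linarith) (by norm_num)

lemma coeff_le_of_exp_le_uweight (hpos : ∀ i, 0 < lam i)
    (hγ : Real.exp (-X / 2) ≤ uweight lam γ) (i : ℕ+) : (γ i : ℝ) ≤ Real.exp X * lam i := by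
  have hnonneg : ∀ j, 0 ≤ (γ j : ℝ) / lam j := fun j =>
    div_nonneg (Nat.cast_nonneg _) (hpos j).le
  by_cases hi : i ∈ γ.support
  · rw [← div_le_iff₀ (hpos i)]
    have hsingle := single_le_sum (fun j _ => hnonneg j) hi
    linarith [(exp_neg_div_two_le_uweight_iff hpos).1 hγ]
  · rw [Finsupp.notMem_support_iff.1 hi, Nat.cast_zero]
    exact mul_nonneg (Real.exp_nonneg X) (hpos i).le

lemma card_le_pow_of_exp_le_uweight (hpos : ∀ i, 0 < lam i) (hone : ∀ i, lam i ≤ 1)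
    {I : Finset ℕ+} (hI : ∀ i, 1 ≤ Real.exp X * lam i → i ∈ I)
    {S : Finset MultiIndex} (hS : ∀ γ ∈ S, Real.exp (-X / 2) ≤ uweight lam γ) :
    #S ≤ (⌊Real.exp X⌋₊ + 1) ^ #I := by
  refine card_le_pow_of_support_subset (fun γ hγ i hi => hI i ?_) fun γ hγ i => Nat.le_floor ?_
  · have hi_one : (1 : ℝ) ≤ γ i := by
      exact_mod_cast Nat.one_le_iff_ne_zero.2 (Finsupp.mem_support_iff.1 hi)
    exact hi_one.trans (coeff_le_of_exp_le_uweight hpos (hS γ hγ) i)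
  · exact (coeff_le_of_exp_le_uweight hpos (hS γ hγ) i).trans
      (mul_le_of_le_one_right (Real.exp_nonneg X) (hone i))

lemma card_le_exp_of_exp_le_uweight {α : ℝ} (hα : 0 < α) (hpos : ∀ i, 0 < lam i)
    (hlam : ∀ i : ℕ+, lam i ≤ Real.exp (-Real.exp (α * i))) (hX : 1 ≤ X)
    {S : Finset MultiIndex} (hS : ∀ γ ∈ S, Real.exp (-X / 2) ≤ uweight lam γ) :
    (#S : ℝ) ≤ Real.exp (Real.log X / α * (X + 1)) := by
  obtain ⟨I, hcard, hI⟩ := exists_finset_mem_iff_cast_le (Real.log X / α)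
  have hone : ∀ i, lam i ≤ 1 := fun i =>
    (hlam i).trans (Real.exp_le_one_iff.2 (neg_nonpos.2 (Real.exp_nonneg _)))
  have hI_card : (#I : ℝ) ≤ Real.log X / α := by
    rw [hcard]
    exact Nat.floor_le (div_nonneg (Real.log_nonneg hX) hα.le)
  calc (#S : ℝ) ≤ ((⌊Real.exp X⌋₊ : ℝ) + 1) ^ #I := by
        exact_mod_cast card_le_pow_of_exp_le_uweight hpos hone
          (fun i hi => (hI i).2 (le_log_div_of_one_le_exp_mul hα (hlam i) hi)) hS
    _ ≤ Real.exp (X + 1) ^ #I := by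
        gcongr
        exact floor_exp_add_one_le (zero_le_one.trans hX)
    _ = Real.exp (#I * (X + 1)) := (Real.exp_nat_mul _ _).symm
    _ ≤ Real.exp (Real.log X / α * (X + 1)) := by gcongr

end Weight

lemma isLittleO_log_mul_add_one_rpow_atTop {δ : ℝ} (hδ : 0 < δ) :
    (fun X : ℝ => Real.log X * (X + 1)) =o[atTop] fun X : ℝ => X ^ (1 + δ) := by
  have hlin : (fun X : ℝ => X + 1) =O[atTop] fun X : ℝ => X :=
    (isBigO_refl _ _).add (isLittleO_const_id_atTop (1 : ℝ)).isBigO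
  refine ((isLittleO_log_rpow_atTop hδ).mul_isBigO hlin).congr' .rfl ?_
  filter_upwards [eventually_gt_atTop 0] with X hX
  rw [add_comm, Real.rpow_add_one hX.ne']

lemma eventually_log_div_mul_add_one_le {α δ c : ℝ} (hα : 0 < α) (hδ : 0 < δ) (hc : 0 < c) :
    ∀ᶠ L : ℝ in atTop,
      Real.log (c * L ^ (1 / (1 + δ))) / α * (c * L ^ (1 / (1 + δ)) + 1) ≤ L := by
  have hscale : Tendsto (fun L : ℝ => c * L ^ (1 / (1 + δ))) atTop atTop :=
    (tendsto_rpow_atTop (by positivity)).const_mul_atTop hc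
  have hbound := hscale.eventually
    ((isLittleO_log_mul_add_one_rpow_atTop hδ).bound (show 0 < α / c ^ (1 + δ) by positivity))
  filter_upwards [hbound, eventually_ge_atTop 0] with L hL hL_nonneg
  have hpow : (c * L ^ (1 / (1 + δ))) ^ (1 + δ) = c ^ (1 + δ) * L := by
    rw [Real.mul_rpow hc.le (by positivity), ← Real.rpow_mul hL_nonneg,
      one_div_mul_cancel (by positivity), Real.rpow_one]
  rw [hpow, Real.norm_of_nonneg (by positivity : 0 ≤ c ^ (1 + δ) * L)] at hL
  rw [div_mul_eq_mul_div, div_le_iff₀ hα]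
  calc _ ≤ α / c ^ (1 + δ) * (c ^ (1 + δ) * L) := (Real.le_norm_self _).trans hL
    _ = L * α := by field_simp

lemma tendsto_log_pnat_atTop : Tendsto (fun s : ℕ+ => Real.log s) atTop atTop :=
  Real.tendsto_log_atTop.comp (tendsto_natCast_atTop_atTop.comp tendsto_PNat_val_atTop_atTop)

theorem uweight_decay_double_exponential_general {α δ η : ℝ} (hα : 0 < α) (hδ : 0 < δ)
    (hη : 0 < η) :
    ∃ sbar : ℕ+, ∀ lam : ℕ+ → ℝ, (∀ i, 0 < lam i) →
      (∀ i : ℕ+, lam i ≤ Real.exp (-Real.exp (α * i))) →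
      ∀ π : ℕ+ → MultiIndex, Function.Injective π → (Antitone fun n => uweight lam (π n)) →
      ∀ s : ℕ+, sbar ≤ s →
        uweight lam (π (s + 1)) < Real.exp (-(η * Real.log s ^ (1 / (1 + δ)))) := by
  have hscale : Tendsto (fun L : ℝ => 2 * η * L ^ (1 / (1 + δ))) atTop atTop :=
    (tendsto_rpow_atTop (by positivity)).const_mul_atTop (by positivity)
  obtain ⟨sbar, hsbar⟩ := eventually_atTop.1 <| tendsto_log_pnat_atTop.eventually <|
    (hscale.eventually_ge_atTop 1).and
      (eventually_log_div_mul_add_one_le hα hδ (mul_pos two_pos hη))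
  refine ⟨sbar, fun lam hpos hlam π hπ hdec s hs => ?_⟩
  obtain ⟨hX, hcount⟩ := hsbar s hs
  refine apply_add_one_lt_of_forall_card_le hπ hdec fun S hS => ?_
  have hexponent : -(η * Real.log s ^ (1 / (1 + δ)))
      = -(2 * η * Real.log s ^ (1 / (1 + δ))) / 2 := by ring
  rw [hexponent] at hS
  have hcard : (#S : ℝ) ≤ s :=
    calc (#S : ℝ) ≤ _ := card_le_exp_of_exp_le_uweight hα hpos hlam hX hS
      _ ≤ Real.exp (Real.log s) := Real.exp_le_exp.2 hcount
      _ = s := Real.exp_log (by exact_mod_cast s.pos)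
  exact_mod_cast hcard

/-- **Decay of `u_{π(s+1)}` for double exponential spectral decay
`λ_i = e^{-e^{α i}}`.**  For every `δ, η > 0` there exists `s̄` such that for
all `s ≥ s̄`, `u_{π(s+1)} ≤ exp(-η (log s)^{1/(1+δ)})`. -/
theorem uweight_decay_double_exponential
    (α : ℝ) (hα : 0 < α)
    (lam : ℕ+ → ℝ) (hlam : ∀ i : ℕ+, lam i = Real.exp (-Real.exp (α * (i : ℝ))))
    (π : ℕ+ → MultiIndex) (hbij : Function.Bijective π)
    (hdec : Antitone fun n => uweight lam (π n))
    (δ η : ℝ) (hδ : 0 < δ) (hη : 0 < η) :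
    ∃ sbar : ℕ+, ∀ s : ℕ+, sbar ≤ s →
      uweight lam (π (s + 1))
        ≤ Real.exp (-(η * (Real.log s) ^ ((1 : ℝ) / (1 + δ)))) := by
  obtain ⟨sbar, hsbar⟩ := uweight_decay_double_exponential_general hα hδ hη
  exact ⟨sbar, fun s hs => (hsbar lam (fun i => hlam i ▸ Real.exp_pos _) (fun i => (hlam i).le)
    π hbij.injective hdec s hs).le⟩
end

section
/- Let α > 0 and λ_i := exp(−exp(α·i)) for every i ≥ 1, let u_γ := (1 + Σ_{i≥1} γ_i/λ_i)^{-1/2} for γ ∈ Γ, and let π be a bijection from the positive integers onto Γ with u_{π(1)} ≥ u_{π(2)} ≥ ⋯. Then for every η > 0 there exist a constant c > 0 and s̄ ∈ ℕ (depending on α and η) such that for all s ≥ s̄ one has u_{π(s+1)} ≥ c · (s+1)^{−η}. -/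
open Finset

/-!
The function `γ ↦ u_γ` is antitone, so if at least `n` multi-indices lie below some `δ`, then a
nonincreasing rearrangement satisfies `u_{π(n)} ≥ u_δ`. Fix `γ` with `d` nonzero entries and take
`δ = m • γ`: at least `(m + 1) ^ d` multi-indices lie below `δ`, while `u_δ ≥ u_γ * m ^ (-1/2)`.
Choosing `m = ⌊n ^ (1/d)⌋` gives `u_{π(n)} ≥ u_γ * n ^ (-1/(2d))`, and `d` is arbitrary.
-/

theorem le_apply_of_antitone_of_card_Iio_lt {ι β M : Type*} [LinearOrder ι]
    [LocallyFiniteOrderBot ι] [Preorder M] {u : β → M} {π : ι → β} (hπ : π.Surjective)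
    (hu : Antitone fun n => u (π n)) {S : Finset β} {t : M} (ht : ∀ b ∈ S, t ≤ u b) {n : ι}
    (hn : #(Iio n) < #S) : t ≤ u (π n) := by
  classical
  obtain ⟨b, hbS, hb⟩ := exists_mem_notMem_of_card_lt_card
    ((card_image_le (f := π)).trans_lt hn)
  obtain ⟨k, rfl⟩ := hπ b
  have hnk : n ≤ k := not_lt.1 fun hk => hb (mem_image_of_mem π (mem_Iio.2 hk))
  exact (ht _ hbS).trans (hu hnk)

theorem exists_finsupp_card_support_eq (ι : Type*) [Infinite ι] (d : ℕ) :
    ∃ γ : ι →₀ ℕ, #γ.support = d := by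
  classical
  obtain ⟨T, hT⟩ := Infinite.exists_subset_card_eq ι d
  exact ⟨Multiset.toFinsupp T.val, by simp [hT]⟩

theorem pow_card_support_le_card_Iic_nsmul {ι : Type*} [DecidableEq ι] (m : ℕ) (γ : ι →₀ ℕ) :
    (m + 1) ^ #γ.support ≤ #(Iic (m • γ)) := by
  rcases eq_or_ne m 0 with rfl | hm
  · simp
  have hentry : ∀ i ∈ γ.support, m + 1 ≤ m * γ i + 1 := fun i hi =>
    Nat.succ_le_succ (Nat.le_mul_of_pos_right m (Nat.pos_of_ne_zero (Finsupp.mem_support_iff.1 hi)))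
  calc (m + 1) ^ #γ.support
      ≤ ∏ i ∈ γ.support, (m * γ i + 1) := pow_card_le_prod _ _ _ hentry
    _ = #(Iic (m • γ)) := by simp [Finsupp.card_Iic, Finsupp.support_smul_eq hm]

theorem natCast_nthRoot_le_rpow_inv {d : ℕ} (hd : d ≠ 0) (n : ℕ) :
    (Nat.nthRoot d n : ℝ) ≤ (n : ℝ) ^ (d : ℝ)⁻¹ := by
  rw [Real.le_rpow_inv_iff_of_pos (Nat.cast_nonneg _) (Nat.cast_nonneg _) (by positivity),
    Real.rpow_natCast]
  exact_mod_cast Nat.pow_nthRoot_le (.inl hd)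

theorem sum_support_div_nonneg {ι : Type*} {lam : ι → ℝ} (hlam : ∀ i, 0 ≤ lam i) (γ : ι →₀ ℕ) :
    0 ≤ ∑ i ∈ γ.support, (γ i : ℝ) / lam i :=
  sum_nonneg fun i _ => div_nonneg (Nat.cast_nonneg _) (hlam i)

theorem sum_support_nsmul_div {ι : Type*} (lam : ι → ℝ) (m : ℕ) (γ : ι →₀ ℕ) :
    ∑ i ∈ (m • γ).support, ((m • γ) i : ℝ) / lam i = m * ∑ i ∈ γ.support, (γ i : ℝ) / lam i := by
  change (m • γ).sum (fun i k => (k : ℝ) / lam i) = _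
  rw [Finsupp.sum_smul_index' (by simp), Finsupp.sum, mul_sum]
  simp only [smul_eq_mul, Nat.cast_mul, mul_div_assoc]

section Weight

variable {lam : ℕ+ → ℝ}

theorem uweight_pos (hlam : ∀ i, 0 < lam i) (γ : MultiIndex) : 0 < uweight lam γ :=
  Real.rpow_pos_of_pos (by linarith [sum_support_div_nonneg (fun i => (hlam i).le) γ]) _

theorem uweight_antitone (hlam : ∀ i, 0 < lam i) : Antitone (uweight lam) := by
  intro γ δ hγδ
  have hsum : γ.sum (fun i k => (k : ℝ) / lam i) ≤ δ.sum fun i k => (k : ℝ) / lam i :=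
    Finsupp.sum_le_sum_index hγδ
      (fun i _ _ _ hab => div_le_div_of_nonneg_right (Nat.cast_le.2 hab) (hlam i).le) (by simp)
  exact Real.rpow_le_rpow_of_nonpos (by linarith [sum_support_div_nonneg (fun i => (hlam i).le) γ])
    (add_le_add_right hsum 1) (by norm_num)

theorem uweight_mul_rpow_le_uweight_nsmul (hlam : ∀ i, 0 < lam i) {m : ℕ} (hm : m ≠ 0)
    (γ : MultiIndex) : uweight lam γ * (m : ℝ) ^ (-(1 : ℝ) / 2) ≤ uweight lam (m • γ) := by
  have hS := sum_support_div_nonneg (fun i => (hlam i).le) γ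
  have hm1 : (1 : ℝ) ≤ m := Nat.one_le_cast.2 (Nat.one_le_iff_ne_zero.2 hm)
  rw [uweight, uweight, sum_support_nsmul_div, ← Real.mul_rpow (by positivity) (by positivity)]
  exact Real.rpow_le_rpow_of_nonpos (by positivity) (by linarith) (by norm_num)

theorem uweight_mul_rpow_le_uweight_apply (hlam : ∀ i, 0 < lam i) {π : ℕ+ → MultiIndex}
    (hπ : π.Surjective) (hdec : Antitone fun n => uweight lam (π n)) {γ : MultiIndex}
    (hγ : γ ≠ 0) (n : ℕ+) :
    uweight lam γ * (n : ℝ) ^ (-(1 : ℝ) / (2 * #γ.support)) ≤ uweight lam (π n) := by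
  set d := #γ.support
  have hd : d ≠ 0 := by simpa [d] using hγ
  set m := Nat.nthRoot d n
  have hlt : (n : ℕ) < (m + 1) ^ d := Nat.lt_pow_nthRoot_add_one hd n
  have hm : m ≠ 0 := by
    intro h
    simp [h] at hlt
  have hcard : #(Iio n) < #(Iic (m • γ)) :=
    calc #(Iio n) < n := by
          rw [← Ico_bot, PNat.card_Ico, PNat.bot_eq_one, PNat.one_coe]
          exact Nat.sub_lt n.pos one_pos
      _ ≤ (m + 1) ^ d := hlt.le
      _ ≤ #(Iic (m • γ)) := pow_card_support_le_card_Iic_nsmul m γ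
  calc uweight lam γ * (n : ℝ) ^ (-(1 : ℝ) / (2 * d))
      = uweight lam γ * ((n : ℝ) ^ (d : ℝ)⁻¹) ^ (-(1 : ℝ) / 2) := by
        rw [← Real.rpow_mul (by positivity)]
        congr 2
        field_simp
    _ ≤ uweight lam γ * (m : ℝ) ^ (-(1 : ℝ) / 2) :=
        mul_le_mul_of_nonneg_left
          (Real.rpow_le_rpow_of_nonpos (by positivity) (natCast_nthRoot_le_rpow_inv hd n)
            (by norm_num))
          (uweight_pos hlam γ).le
    _ ≤ uweight lam (m • γ) := uweight_mul_rpow_le_uweight_nsmul hlam hm γ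
    _ ≤ uweight lam (π n) :=
        le_apply_of_antitone_of_card_Iio_lt hπ hdec
          (fun δ hδ => uweight_antitone hlam (mem_Iic.1 hδ)) hcard

end Weight

theorem uweight_lower_bound_double_exponential_general
    (lam : ℕ+ → ℝ) (hlam : ∀ i, 0 < lam i)
    (π : ℕ+ → MultiIndex) (hπ : Function.Surjective π)
    (hdec : Antitone fun n => uweight lam (π n))
    (η : ℝ) (hη : 0 < η) :
    ∃ c : ℝ, 0 < c ∧ ∀ n : ℕ+, c * (n : ℝ) ^ (-η) ≤ uweight lam (π n) := by
  obtain ⟨d, hd⟩ := exists_nat_gt (1 / (2 * η))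
  have hd0 : (0 : ℝ) < d := lt_trans (by positivity) hd
  obtain ⟨γ, hγd⟩ := exists_finsupp_card_support_eq ℕ+ d
  have hγ : γ ≠ 0 := by
    rintro rfl
    simp [← hγd] at hd0
  have hexp : -η ≤ -(1 : ℝ) / (2 * #γ.support) := by
    rw [hγd, neg_div, neg_le_neg_iff, div_le_iff₀ (by positivity)]
    rw [div_lt_iff₀ (by positivity)] at hd
    linarith
  refine ⟨uweight lam γ, uweight_pos hlam γ, fun n => ?_⟩
  have hn : (1 : ℝ) ≤ n := Nat.one_le_cast.2 n.pos
  calc uweight lam γ * (n : ℝ) ^ (-η)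
      ≤ uweight lam γ * (n : ℝ) ^ (-(1 : ℝ) / (2 * #γ.support)) :=
        mul_le_mul_of_nonneg_left (Real.rpow_le_rpow_of_exponent_le hn hexp)
          (uweight_pos hlam γ).le
    _ ≤ uweight lam (π n) := uweight_mul_rpow_le_uweight_apply hlam hπ hdec hγ n

/-- **Lower bound for `u_{π(s+1)}` for double exponential spectral decay
`λ_i = e^{-e^{α i}}`.**  For every `η > 0` there exist `c > 0` and `s̄` such
that for all `s ≥ s̄`, `u_{π(s+1)} ≥ c · (s+1)^{-η}`. -/
theorem uweight_lower_bound_double_exponential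
    (α : ℝ) (hα : 0 < α)
    (lam : ℕ+ → ℝ) (hlam : ∀ i : ℕ+, lam i = Real.exp (-Real.exp (α * (i : ℝ))))
    (π : ℕ+ → MultiIndex) (hbij : Function.Bijective π)
    (hdec : Antitone fun n => uweight lam (π n))
    (η : ℝ) (hη : 0 < η) :
    ∃ c : ℝ, 0 < c ∧ ∃ sbar : ℕ+, ∀ s : ℕ+, sbar ≤ s →
      c * ((s : ℝ) + 1) ^ (-η) ≤ uweight lam (π (s + 1)) := by
  obtain ⟨c, hc, h⟩ := uweight_lower_bound_double_exponential_general lam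
    (fun i => hlam i ▸ Real.exp_pos _) π hbij.surjective hdec η hη
  exact ⟨c, hc, 1, fun s _ => by simpa using h (s + 1)⟩
end

section
/- Let d ≥ 1 be an integer and a_1, …, a_d be real numbers with 0 < a_1 ≤ a_2 ≤ ⋯ ≤ a_d. Then the anisotropic total degree index set Λ := {ν ∈ ℕ_0^d : Σ_{i=1}^d a_i ν_i ≤ 1} is finite and its cardinality satisfies ∏_{i=1}^d 1/(a_i · i) ≤ |Λ| ≤ ∏_{i=1}^d (1/(a_i · i) + 1). -/
open Finset

/-!
Put `Λ_d(t) = {ν ∈ ℕ^d | ∑ a_i ν_i ≤ t}` and `A = a_d`. Splitting `Λ_d(t)` by whether `ν_d = 0`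
gives `|Λ_d(t)| = |Λ_{d-1}(t)| + |Λ_d(t - A)|`. Hence a function `F_d` bounds `|Λ_d|` from below
(above) as soon as `F_d(t)` is at most (at least) `F_{d-1}(t) + F_d(t - A)` for `t ≥ A` and
`F_{d-1}(t)` for `0 ≤ t < A`.
For `F_d(t) = ∏ t / (a_i i)` the first inequality is Bernoulli's. For
`F_d(t) = ∏ (t / (a_i i) + 1)` it reads `(t + (d-1) A) F_{d-1}(t - A) ≤ t F_{d-1}(t)`, a product of
telescoping factorwise inequalities; these rely on `a_i ≤ A`, i.e. on the ordering of the weights.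
-/

@[elab_as_elim]
theorem nonneg_induction_of_sub {G : Type*} [AddCommGroup G] [LinearOrder G] [IsOrderedAddMonoid G]
    [Archimedean G] {A : G} (hA : 0 < A) {P : G → Prop} (base : ∀ t, 0 ≤ t → t < A → P t)
    (step : ∀ t, A ≤ t → P (t - A) → P t) (t : G) (ht : 0 ≤ t) : P t := by
  obtain ⟨n, hn⟩ := Archimedean.arch t hA
  induction n generalizing t with
  | zero => exact base t ht (hn.trans_lt (by rwa [zero_nsmul]))
  | succ n ih =>
    rcases lt_or_ge t A with hlt | hle
    · exact base t ht hlt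
    · exact step t hle (ih _ (sub_nonneg.2 hle) (sub_le_iff_le_add.2 (by rwa [← succ_nsmul])))

/-- The anisotropic total degree index set `{ν | ∑ i, a i * ν i ≤ t}` with weights `a`. The budget
`t`, equal to `1` for the usual index set, is a parameter because the recursion over the slices
`ν_d = k` lowers it. -/
def anisotropicTD {ι R : Type*} [Fintype ι] [Semiring R] [LE R] (a : ι → R) (t : R) :
    Set (ι → ℕ) :=
  {ν | ∑ i, a i * (ν i : R) ≤ t}

namespace anisotropicTD

section IndexSet

variable {ι R : Type*} [Fintype ι] [Semiring R] {a : ι → R} {t : R}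

theorem finite [LinearOrder R] [IsStrictOrderedRing R] [Archimedean R] (ha : ∀ i, 0 < a i) (t : R) :
    (anisotropicTD a t).Finite := by
  classical
  choose N hN using fun i ↦ Archimedean.arch t (ha i)
  refine (Set.finite_Iic N).subset fun ν hν i ↦ ?_
  have hterm : a i * (ν i : R) ≤ ∑ j, a j * (ν j : R) :=
    single_le_sum (f := fun j ↦ a j * (ν j : R))
      (fun j _ ↦ mul_nonneg (ha j).le (Nat.cast_nonneg _)) (mem_univ i)
  have hle : ν i • a i ≤ N i • a i := by
    simpa only [nsmul_eq_mul'] using (hterm.trans hν).trans (hN i)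
  exact (nsmul_le_nsmul_iff_left (ha i)).1 hle

theorem eq_empty_of_neg [PartialOrder R] [IsOrderedRing R] (ha : ∀ i, 0 ≤ a i) (ht : t < 0) :
    anisotropicTD a t = ∅ :=
  Set.eq_empty_of_forall_notMem fun _ hν ↦
    (ht.trans_le (sum_nonneg fun i _ ↦ mul_nonneg (ha i) (Nat.cast_nonneg _))).not_ge hν

theorem ncard_of_isEmpty [IsEmpty ι] [LE R] (a : ι → R) (ht : 0 ≤ t) :
    (anisotropicTD a t).ncard = 1 := by
  have huniv : anisotropicTD a t = Set.univ := by simp [anisotropicTD, ht]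
  rw [huniv, Set.ncard_univ, Nat.card_unique]

end IndexSet

section Slices

theorem image_add_single {ι R : Type*} [Fintype ι] [DecidableEq ι] [Ring R] [LE R]
    [AddRightMono R] (a : ι → R) (t : R) (j : ι) :
    (· + Pi.single j 1) '' anisotropicTD a (t - a j) = anisotropicTD a t \ {ν | ν j = 0} := by
  have hsum (ν : ι → ℕ) :
      ∑ i, a i * ((ν + Pi.single j 1 : ι → ℕ) i : R) = ∑ i, a i * (ν i : R) + a j := by
    simp [mul_add, sum_add_distrib, Pi.single_apply]
  ext ν
  constructor
  · rintro ⟨μ, hμ, rfl⟩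
    exact ⟨(hsum μ).trans_le (le_sub_iff_add_le.1 hμ), by simp⟩
  · rintro ⟨hν, hj : ν j ≠ 0⟩
    have hsplit : ν - Pi.single j 1 + Pi.single j 1 = ν :=
      tsub_add_cancel_of_le <| by
        intro i
        rcases eq_or_ne i j with rfl | hij
        · simpa using Nat.one_le_iff_ne_zero.2 hj
        · simp [hij]
    refine ⟨ν - Pi.single j 1, le_sub_iff_add_le.2 ?_, hsplit⟩
    rw [← hsum, hsplit]
    exact hν

theorem image_snoc_zero {R : Type*} [Semiring R] [LE R] {d : ℕ} (a : Fin (d + 1) → R) (t : R) :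
    (Fin.snoc (α := fun _ ↦ ℕ) · 0) '' anisotropicTD (Fin.init a) t =
      anisotropicTD a t ∩ {ν | ν (Fin.last d) = 0} := by
  ext ν
  constructor
  · rintro ⟨μ, hμ, rfl⟩
    exact ⟨by simpa [anisotropicTD, Fin.sum_univ_castSucc, Fin.init] using hμ, by simp⟩
  · rintro ⟨hν, hlast : ν (Fin.last d) = 0⟩
    refine ⟨Fin.init ν, ?_, by simpa only [hlast] using Fin.snoc_init_self ν⟩
    simpa [anisotropicTD, Fin.sum_univ_castSucc, Fin.init, hlast] using hν

variable {R : Type*} [Ring R] [LinearOrder R] [IsStrictOrderedRing R] [Archimedean R] {d : ℕ}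
  {a : Fin (d + 1) → R} {t : R}

theorem ncard_eq_init_add (ha : ∀ i, 0 < a i) (t : R) :
    (anisotropicTD a t).ncard =
      (anisotropicTD (Fin.init a) t).ncard + (anisotropicTD a (t - a (Fin.last d))).ncard := by
  rw [← Set.ncard_inter_add_ncard_sdiff_eq_ncard _ {ν | ν (Fin.last d) = 0} (finite ha t),
    ← image_snoc_zero, ← image_add_single,
    Set.ncard_image_of_injective _ (Fin.snoc_left_injective (α := fun _ ↦ ℕ) 0),
    Set.ncard_image_of_injective _ (add_left_injective _)]

theorem ncard_eq_init_of_lt (ha : ∀ i, 0 < a i) (ht : t < a (Fin.last d)) :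
    (anisotropicTD a t).ncard = (anisotropicTD (Fin.init a) t).ncard := by
  rw [ncard_eq_init_add ha, eq_empty_of_neg (fun i ↦ (ha i).le) (sub_neg.2 ht), Set.ncard_empty,
    add_zero]

end Slices

end anisotropicTD

/-- The volume `t ^ d / (d! * ∏ i, a i)` of the simplex `{x ≥ 0 | ∑ i, a i * x i ≤ t}`, the
continuous counterpart of `anisotropicTD a t`. The factors `i + 1` of `d!` are distributed over the
weights. -/
def simplexVolume {K : Type*} [Field K] {d : ℕ} (a : Fin d → K) (t : K) : K :=
  ∏ i, t / (a i * ((i : ℕ) + 1 : K))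

/-- The upper bound for the cardinality of `anisotropicTD a t`: the product defining
`simplexVolume a t` with every factor increased by one. -/
def tdUpperBound {K : Type*} [Field K] {d : ℕ} (a : Fin d → K) (t : K) : K :=
  ∏ i, (t / (a i * ((i : ℕ) + 1 : K)) + 1)

section ProductRecursions

variable {K : Type*} [Field K] {d : ℕ}

theorem simplexVolume_eq_init_mul (a : Fin (d + 1) → K) (t : K) :
    simplexVolume a t = simplexVolume (Fin.init a) t * (t / (a (Fin.last d) * (d + 1))) := by
  simp only [simplexVolume, Fin.prod_univ_castSucc, Fin.init, Fin.val_castSucc, Fin.val_last]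

theorem simplexVolume_eq_pow_mul (a : Fin d → K) (t : K) :
    simplexVolume a t = t ^ d * simplexVolume a 1 := by
  simp [simplexVolume, div_eq_mul_inv, prod_mul_distrib]

theorem tdUpperBound_eq_init_mul (a : Fin (d + 1) → K) (t : K) :
    tdUpperBound a t = tdUpperBound (Fin.init a) t * (t / (a (Fin.last d) * (d + 1)) + 1) := by
  simp only [tdUpperBound, Fin.prod_univ_castSucc, Fin.init, Fin.val_castSucc, Fin.val_last]

variable [LinearOrder K] [IsStrictOrderedRing K] {t A : K}

theorem simplexVolume_nonneg {a : Fin d → K} (ha : ∀ i, 0 ≤ a i) (ht : 0 ≤ t) :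
    0 ≤ simplexVolume a t :=
  prod_nonneg fun i _ ↦ div_nonneg ht (mul_nonneg (ha i) (by positivity))

theorem tdUpperBound_nonneg {a : Fin d → K} (ha : ∀ i, 0 ≤ a i) (ht : 0 ≤ t) :
    0 ≤ tdUpperBound a t :=
  prod_nonneg fun i _ ↦ add_nonneg (div_nonneg ht (mul_nonneg (ha i) (by positivity))) zero_le_one

theorem simplexVolume_le_init {a : Fin (d + 1) → K} (ha : ∀ i, 0 ≤ a i) (ht : 0 ≤ t)
    (hlast : t ≤ a (Fin.last d)) : simplexVolume a t ≤ simplexVolume (Fin.init a) t := by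
  rw [simplexVolume_eq_init_mul]
  refine mul_le_of_le_one_right (simplexVolume_nonneg (fun i ↦ ha i.castSucc) ht) ?_
  refine div_le_one_of_le₀ (hlast.trans ?_) (mul_nonneg (ha _) (by positivity))
  exact le_mul_of_one_le_right (ha _) (by simp)

theorem simplexVolume_le_init_add {a : Fin (d + 1) → K} (ha : ∀ i, 0 < a i)
    (hlast : a (Fin.last d) ≤ t) :
    simplexVolume a t ≤ simplexVolume (Fin.init a) t + simplexVolume a (t - a (Fin.last d)) := by
  have hA := ha (Fin.last d)
  have bernoulli : t ^ (d + 1) ≤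
      t ^ d * (a (Fin.last d) * (d + 1)) + (t - a (Fin.last d)) ^ (d + 1) := by
    have h := pow_add_mul_le_add_pow (a := t) (b := -a (Fin.last d)) (by linarith) (by linarith)
      (d + 1)
    push_cast [add_tsub_cancel_right, ← sub_eq_add_neg] at h
    linarith
  have hvol : simplexVolume (Fin.init a) t =
      t ^ d * (a (Fin.last d) * (d + 1)) * simplexVolume a 1 := by
    rw [simplexVolume_eq_init_mul, simplexVolume_eq_pow_mul]
    field_simp
  rw [hvol, simplexVolume_eq_pow_mul a t, simplexVolume_eq_pow_mul a (t - _), ← add_mul]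
  exact mul_le_mul_of_nonneg_right bernoulli
    (simplexVolume_nonneg (fun i ↦ (ha i).le) zero_le_one)

theorem tdUpperBound_init_le {a : Fin (d + 1) → K} (ha : ∀ i, 0 ≤ a i) (ht : 0 ≤ t) :
    tdUpperBound (Fin.init a) t ≤ tdUpperBound a t := by
  rw [tdUpperBound_eq_init_mul]
  exact le_mul_of_one_le_right (tdUpperBound_nonneg (fun i ↦ ha i.castSucc) ht)
    (le_add_of_nonneg_left (div_nonneg ht (mul_nonneg (ha _) (by positivity))))

-- Equivalently `(t + s + A) / (t + s) ≤ (t + c) / (t - A + c)`, an equality for `c = s + A`; for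
-- `s = 0, A, 2 * A, …` the left-hand sides telescope.
theorem add_mul_sub_div_add_one_le {s c : K} (hA : 0 ≤ A) (hc : 0 < c) (hcs : c ≤ s + A) :
    (t + (s + A)) * ((t - A) / c + 1) ≤ (t + s) * (t / c + 1) := by
  have hdiff : (t + s) * (t / c + 1) - (t + (s + A)) * ((t - A) / c + 1) =
      A * (s + A - c) / c := by
    field_simp
    ring
  exact sub_nonneg.1 (hdiff ▸ div_nonneg (mul_nonneg hA (sub_nonneg.2 hcs)) hc.le)

theorem add_mul_tdUpperBound_sub_le {a : Fin d → K} (ha : ∀ i, 0 < a i) (hA : 0 ≤ A)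
    (haA : ∀ i, a i ≤ A) (ht : A ≤ t) :
    (t + d * A) * tdUpperBound a (t - A) ≤ t * tdUpperBound a t := by
  induction d with
  | zero => simp [tdUpperBound]
  | succ d ih =>
    have hc : 0 < a (Fin.last d) * (d + 1) := mul_pos (ha _) (by positivity)
    have hcA : a (Fin.last d) * (d + 1) ≤ d * A + A := by
      linarith [mul_le_mul_of_nonneg_right (haA (Fin.last d)) (by positivity : (0 : K) ≤ d + 1)]
    have hU : 0 ≤ tdUpperBound (Fin.init a) (t - A) :=
      tdUpperBound_nonneg (fun i ↦ (ha i.castSucc).le) (sub_nonneg.2 ht)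
    have hfactor : 0 ≤ t / (a (Fin.last d) * (d + 1)) + 1 :=
      add_nonneg (div_nonneg (hA.trans ht) hc.le) zero_le_one
    rw [tdUpperBound_eq_init_mul, tdUpperBound_eq_init_mul]
    set c := a (Fin.last d) * (d + 1)
    calc (t + (d + 1 : ℕ) * A) * (tdUpperBound (Fin.init a) (t - A) * ((t - A) / c + 1))
        = tdUpperBound (Fin.init a) (t - A) * ((t + (d * A + A)) * ((t - A) / c + 1)) := by
          push_cast; ring
      _ ≤ tdUpperBound (Fin.init a) (t - A) * ((t + d * A) * (t / c + 1)) :=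
          mul_le_mul_of_nonneg_left (add_mul_sub_div_add_one_le hA hc hcA) hU
      _ = (t + d * A) * tdUpperBound (Fin.init a) (t - A) * (t / c + 1) := by ring
      _ ≤ t * tdUpperBound (Fin.init a) t * (t / c + 1) :=
          mul_le_mul_of_nonneg_right (ih (fun i ↦ ha i.castSucc) fun i ↦ haA i.castSucc) hfactor
      _ = t * (tdUpperBound (Fin.init a) t * (t / c + 1)) := by ring

theorem tdUpperBound_init_add_le {a : Fin (d + 1) → K} (ha : ∀ i, 0 < a i)
    (hmax : ∀ i, a i ≤ a (Fin.last d)) (ht : a (Fin.last d) ≤ t) :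
    tdUpperBound (Fin.init a) t + tdUpperBound a (t - a (Fin.last d)) ≤ tdUpperBound a t := by
  have hA := ha (Fin.last d)
  have hkey := add_mul_tdUpperBound_sub_le (a := Fin.init a) (fun i ↦ ha i.castSucc) hA.le
    (fun i ↦ hmax i.castSucc) ht
  rw [tdUpperBound_eq_init_mul a t, tdUpperBound_eq_init_mul a (t - _)]
  set A := a (Fin.last d)
  calc tdUpperBound (Fin.init a) t
        + tdUpperBound (Fin.init a) (t - A) * ((t - A) / (A * (d + 1)) + 1)
      = tdUpperBound (Fin.init a) t
        + (t + d * A) * tdUpperBound (Fin.init a) (t - A) / (A * (d + 1)) := by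
        field_simp; ring
    _ ≤ tdUpperBound (Fin.init a) t + t * tdUpperBound (Fin.init a) t / (A * (d + 1)) := by gcongr
    _ = tdUpperBound (Fin.init a) t * (t / (A * (d + 1)) + 1) := by ring

end ProductRecursions

namespace anisotropicTD

variable {K : Type*} [Field K] [LinearOrder K] [IsStrictOrderedRing K] [Archimedean K] {d : ℕ}
  {a : Fin d → K} {t : K}

theorem simplexVolume_le_ncard (ha : ∀ i, 0 < a i) (ht : 0 ≤ t) :
    simplexVolume a t ≤ (anisotropicTD a t).ncard := by
  induction d generalizing t with
  | zero => simp [simplexVolume, ncard_of_isEmpty a ht]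
  | succ d ih =>
    have hinit {s : K} (hs : 0 ≤ s) := ih (a := Fin.init a) (fun i ↦ ha i.castSucc) hs
    refine nonneg_induction_of_sub (ha (Fin.last d)) (fun s hs hlt ↦ ?_) (fun s hle hsub ↦ ?_) t ht
    · rw [ncard_eq_init_of_lt ha hlt]
      exact (simplexVolume_le_init (fun i ↦ (ha i).le) hs hlt.le).trans (hinit hs)
    · rw [ncard_eq_init_add ha, Nat.cast_add]
      exact (simplexVolume_le_init_add ha hle).trans
        (add_le_add (hinit ((ha _).le.trans hle)) hsub)

theorem ncard_le_tdUpperBound (ha : ∀ i, 0 < a i) (hmono : Monotone a) (ht : 0 ≤ t) :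
    (anisotropicTD a t).ncard ≤ tdUpperBound a t := by
  induction d generalizing t with
  | zero => simp [tdUpperBound, ncard_of_isEmpty a ht]
  | succ d ih =>
    have hinit {s : K} (hs : 0 ≤ s) := ih (a := Fin.init a) (fun i ↦ ha i.castSucc)
      (hmono.comp Fin.strictMono_castSucc.monotone) hs
    refine nonneg_induction_of_sub (ha (Fin.last d)) (fun s hs hlt ↦ ?_) (fun s hle hsub ↦ ?_) t ht
    · rw [ncard_eq_init_of_lt ha hlt]
      exact (hinit hs).trans (tdUpperBound_init_le (fun i ↦ (ha i).le) hs)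
    · rw [ncard_eq_init_add ha, Nat.cast_add]
      exact (add_le_add (hinit ((ha _).le.trans hle)) hsub).trans
        (tdUpperBound_init_add_le ha (fun i ↦ hmono i.le_last) hle)

end anisotropicTD

/-- **Lower and upper size bounds for anisotropic total degree index sets.**
For `0 < a_1 ≤ ⋯ ≤ a_d`, the set `Λ = {ν ∈ ℕ_0^d : ∑ a_i ν_i ≤ 1}` is finite
and `∏_{i=1}^d 1/(a_i i) ≤ |Λ| ≤ ∏_{i=1}^d (1/(a_i i) + 1)`. -/
theorem anisotropicTD_card_bounds
    (d : ℕ) (hd : 1 ≤ d) (a : Fin d → ℝ)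
    (hpos : ∀ i, 0 < a i) (hmono : Monotone a) :
    {ν : Fin d → ℕ | ∑ i, a i * (ν i : ℝ) ≤ 1}.Finite ∧
    (∏ i : Fin d, 1 / (a i * ((i : ℕ) + 1 : ℝ)))
        ≤ ({ν : Fin d → ℕ | ∑ i, a i * (ν i : ℝ) ≤ 1}.ncard : ℝ) ∧
    ({ν : Fin d → ℕ | ∑ i, a i * (ν i : ℝ) ≤ 1}.ncard : ℝ)
        ≤ ∏ i : Fin d, (1 / (a i * ((i : ℕ) + 1 : ℝ)) + 1) := by
  exact ⟨anisotropicTD.finite hpos 1, anisotropicTD.simplexVolume_le_ncard hpos zero_le_one,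
    anisotropicTD.ncard_le_tdUpperBound hpos hmono zero_le_one⟩
end

section
/- Let λ = (λ_i)_{i≥1} be a nonincreasing sequence of positive real numbers, let ε > 0, and let n ≥ 1 be an integer. Then the set S(ε, n) := {γ ∈ Γ : Σ_{i≥1} γ_i/λ_i ≤ ε^{−2} and γ_i = 0 for all i > n} is finite and its cardinality satisfies |S(ε, n)| ≥ ∏_{i=1}^{n} λ_i/(ε² · i). -/
open Finset

/-!
A lattice point `γ` of the simplex `∑ i, γ i • w i ≤ T` with coordinates in `insert j s` either has
`γ j = 0`, and then lies in the face with coordinates in `s`, or is the translate by the `j`-th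
unit vector of a lattice point of the simplex with threshold `T - w j`. Hence, as a function of the
threshold, the number of lattice points grows over each step of length `w j` at least by the number
of lattice points in dimension one less. By induction on the dimension, comparison with the convex
function `x ↦ x ^ (m + 1)`, which lies above its tangent lines, shows that the number of lattice
points is at least the volume `T ^ #s / ((#s)! * ∏ i ∈ s, w i)` of the simplex.
-/

open scoped Nat

section LatticePoints

variable {ι M : Type*} [AddCommMonoid M]

lemma nsmul_apply_le_weight [PartialOrder M] [IsOrderedAddMonoid M] {w : ι → M} {γ : ι →₀ ℕ}
    (hw : ∀ i ∈ γ.support, 0 ≤ w i) (i : ι) : γ i • w i ≤ Finsupp.weight w γ := by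
  have hterm : ∀ k ∈ γ.support, 0 ≤ γ k • w k := fun k hk => nsmul_nonneg (hw k hk) (γ k)
  rw [Finsupp.weight_apply]
  by_cases hi : i ∈ γ.support
  · exact single_le_sum hterm hi
  · rw [Finsupp.notMem_support_iff.mp hi, zero_nsmul]
    exact sum_nonneg hterm

/-- The points with natural number coordinates in the simplex cut out of the coordinate subspace
spanned by `s` by the inequality `∑ i, γ i • w i ≤ T`. The sum is expressed as `Finsupp.weight`,
which does not mention `s` and is additive in `γ`. -/
def simplexLatticePoints [LE M] (w : ι → M) (s : Finset ι) (T : M) : Set (ι →₀ ℕ) :=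
  {γ | γ.support ⊆ s ∧ Finsupp.weight w γ ≤ T}

lemma simplexLatticePoints_mono [LE M] (w : ι → M) {s t : Finset ι} (h : s ⊆ t) (T : M) :
    simplexLatticePoints w s T ⊆ simplexLatticePoints w t T :=
  fun _ hγ => ⟨hγ.1.trans h, hγ.2⟩

lemma simplexLatticePoints_empty [LE M] (w : ι → M) {T : M} (hT : 0 ≤ T) :
    simplexLatticePoints w ∅ T = {0} := by
  ext γ
  simp only [simplexLatticePoints, subset_empty, Finsupp.support_eq_empty, Set.mem_ofPred_eq,
    Set.mem_singleton_iff, and_iff_left_iff_imp]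
  rintro rfl
  rwa [map_zero]

lemma add_single_mem_simplexLatticePoints [Preorder M] [IsOrderedAddMonoid M] {w : ι → M}
    {s : Finset ι} {γ : ι →₀ ℕ} {T : M} {j : ι} (hj : j ∈ s)
    (hγ : γ ∈ simplexLatticePoints w s T) :
    γ + Finsupp.single j 1 ∈ simplexLatticePoints w s (T + w j) := by
  classical
  refine ⟨Finsupp.support_add.trans (union_subset hγ.1 ?_), ?_⟩
  · exact Finsupp.support_single_subset.trans (singleton_subset_iff.mpr hj)
  · rw [map_add, Finsupp.weight_single, one_nsmul]
    exact add_le_add_left hγ.2 (w j)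

variable [LinearOrder M] [IsOrderedCancelAddMonoid M] [Archimedean M] {w : ι → M} {s : Finset ι}

lemma finite_simplexLatticePoints (hw : ∀ i ∈ s, 0 < w i) (T : M) :
    (simplexLatticePoints w s T).Finite := by
  classical
  choose! N hN using fun i hi => Archimedean.arch T (hw i hi)
  refine (Set.finite_Iic (Finsupp.indicator s fun i _ => N i)).subset fun γ hγ i => ?_
  by_cases hi : i ∈ s
  · rw [Finsupp.indicator_of_mem hi]
    have hle : γ i • w i ≤ N i • w i :=
      (nsmul_apply_le_weight (fun k hk => (hw k (hγ.1 hk)).le) i).trans (hγ.2.trans (hN i hi))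
    exact (nsmul_le_nsmul_iff_left (hw i hi)).mp hle
  · rw [Finsupp.notMem_support_iff.mp fun h => hi (hγ.1 h)]
    exact Nat.zero_le _

lemma ncard_simplexLatticePoints_add_le [DecidableEq ι] {j : ι} (hj : j ∉ s)
    (hw : ∀ i ∈ insert j s, 0 < w i) (T : M) :
    (simplexLatticePoints w s (T + w j)).ncard + (simplexLatticePoints w (insert j s) T).ncard ≤
      (simplexLatticePoints w (insert j s) (T + w j)).ncard := by
  let shift : (ι →₀ ℕ) → (ι →₀ ℕ) := fun γ => γ + Finsupp.single j 1
  have hshift : shift.Injective := add_left_injective _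
  have hdisj : Disjoint (simplexLatticePoints w s (T + w j))
      (shift '' simplexLatticePoints w (insert j s) T) := by
    rw [Set.disjoint_left]
    rintro _ hγ ⟨γ, _, rfl⟩
    exact hj (hγ.1 (by simp [shift]))
  have hsub : simplexLatticePoints w s (T + w j) ∪
      shift '' simplexLatticePoints w (insert j s) T ⊆
      simplexLatticePoints w (insert j s) (T + w j) := by
    refine Set.union_subset (simplexLatticePoints_mono w (subset_insert j s) _) ?_
    rintro _ ⟨γ, hγ, rfl⟩
    exact add_single_mem_simplexLatticePoints (mem_insert_self j s) hγ
  have hfin := finite_simplexLatticePoints hw (T + w j)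
  rw [← Set.ncard_image_of_injective (simplexLatticePoints w (insert j s) T) hshift,
    ← Set.ncard_union_eq hdisj (hfin.subset (Set.subset_union_left.trans hsub))
      (hfin.subset (Set.subset_union_right.trans hsub))]
  exact Set.ncard_le_ncard hsub hfin

end LatticePoints

section PowGrowth

variable {R : Type*} [CommRing R] [LinearOrder R] [IsStrictOrderedRing R]

lemma pow_succ_le_pow_succ_add_mul {a x y : R} (hx : 0 ≤ x) (hy : 0 ≤ y) (hxy : x - a ≤ y)
    (m : ℕ) : x ^ (m + 1) ≤ y ^ (m + 1) + (m + 1) * a * x ^ m := by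
  have tangent : x ^ (m + 1) + (m + 1 : ℕ) * x ^ m * (y - x) ≤ y ^ (m + 1) := by
    simpa using pow_add_mul_le_add_pow hx (b := y - x) (by linarith) (m + 1)
  have slope : 0 ≤ (m + 1) * x ^ m * (y - (x - a)) :=
    mul_nonneg (by positivity) (sub_nonneg.mpr hxy)
  push_cast at tangent
  linarith

variable [Archimedean R]

lemma mul_pow_succ_le_of_forall_add_le {F : R → R} {a c : R} {m : ℕ} (ha : 0 < a) (hc : 0 ≤ c)
    (hF : ∀ x < 0, 0 ≤ F x)
    (hstep : ∀ x, 0 ≤ x → c * ((m + 1) * a * x ^ m) + F (x - a) ≤ F x) {x : R} (hx : 0 ≤ x) :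
    c * x ^ (m + 1) ≤ F x := by
  obtain ⟨k, hk⟩ := exists_lt_nsmul ha x
  induction k generalizing x with
  | zero => exact absurd hx (by simpa using hk)
  | succ k ih =>
    obtain ⟨y, hy, hxy, hFy⟩ : ∃ y, 0 ≤ y ∧ x - a ≤ y ∧ c * y ^ (m + 1) ≤ F (x - a) := by
      rcases lt_or_ge (x - a) 0 with hneg | hnonneg
      · exact ⟨0, le_rfl, hneg.le, by simpa using hF _ hneg⟩
      · refine ⟨x - a, hnonneg, le_rfl, ih hnonneg ?_⟩
        rwa [sub_lt_iff_lt_add, ← succ_nsmul]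
    calc c * x ^ (m + 1)
        ≤ c * (y ^ (m + 1) + (m + 1) * a * x ^ m) := by
          gcongr
          exact pow_succ_le_pow_succ_add_mul hx hy hxy m
      _ = c * ((m + 1) * a * x ^ m) + c * y ^ (m + 1) := by ring
      _ ≤ c * ((m + 1) * a * x ^ m) + F (x - a) := by gcongr
      _ ≤ F x := hstep x hx

end PowGrowth

theorem pow_card_div_le_ncard_simplexLatticePoints {ι K : Type*} [Field K] [LinearOrder K]
    [IsStrictOrderedRing K] [Archimedean K] {w : ι → K} {s : Finset ι} (hw : ∀ i ∈ s, 0 < w i)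
    {T : K} (hT : 0 ≤ T) :
    T ^ #s / ((#s)! * ∏ i ∈ s, w i) ≤ (simplexLatticePoints w s T).ncard := by
  classical
  induction s using Finset.induction_on generalizing T with
  | empty => simp [simplexLatticePoints_empty w hT]
  | insert j s hj ih =>
    obtain ⟨hwj, hws⟩ := (forall_mem_insert _ _ _).mp hw
    have hprod : 0 < ∏ i ∈ s, w i := prod_pos hws
    rw [card_insert_of_notMem hj, prod_insert hj, div_eq_inv_mul]
    refine mul_pow_succ_le_of_forall_add_le
      (F := fun x => ((simplexLatticePoints w (insert j s) x).ncard : K))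
      hwj (by positivity) (fun _ _ => Nat.cast_nonneg _) (fun x hx => ?_) hT
    calc (((#s + 1)! : K) * (w j * ∏ i ∈ s, w i))⁻¹ * ((#s + 1) * w j * x ^ #s) +
          (simplexLatticePoints w (insert j s) (x - w j)).ncard
        = x ^ #s / ((#s)! * ∏ i ∈ s, w i) +
          (simplexLatticePoints w (insert j s) (x - w j)).ncard := by
          rw [Nat.factorial_succ]
          push_cast
          field_simp
      _ ≤ (simplexLatticePoints w s x).ncard +
          (simplexLatticePoints w (insert j s) (x - w j)).ncard := by
          gcongr
          exact ih hws hx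
      _ ≤ (simplexLatticePoints w (insert j s) x).ncard := by
          have hrec := ncard_simplexLatticePoints_add_le hj hw (x - w j)
          rw [sub_add_cancel] at hrec
          exact_mod_cast hrec

lemma support_subset_Icc_one_iff {M : Type*} [Zero M] {γ : ℕ+ →₀ M} {n : ℕ+} :
    γ.support ⊆ Icc 1 n ↔ ∀ i, n < i → γ i = 0 := by
  simp only [subset_iff, mem_Icc, one_le, true_and, Finsupp.mem_support_iff]
  exact forall_congr' fun i => by rw [← not_le, not_imp_comm]

lemma prod_Icc_one_coe_eq_factorial (n : ℕ+) : ∏ i ∈ Icc 1 n, (i : ℕ) = (n : ℕ)! := by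
  calc ∏ i ∈ Icc 1 n, (i : ℕ)
      = ∏ k ∈ (Icc 1 n).map (Function.Embedding.subtype _), k :=
        (prod_map (Icc 1 n) (Function.Embedding.subtype fun k : ℕ => 0 < k) id).symm
    _ = ∏ k ∈ Ico 1 ((n : ℕ) + 1), k := by
      rw [PNat.map_subtype_embedding_Icc, PNat.one_coe, Ico_add_one_right_eq_Icc]
    _ = (n : ℕ)! := prod_Ico_id_eq_factorial n

lemma setOf_sum_div_le_eq_simplexLatticePoints {K : Type*} [DivisionSemiring K] [LE K]
    (lam : ℕ+ → K) (T : K) (n : ℕ+) :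
    {γ : MultiIndex | (∑ i ∈ γ.support, (γ i : K) / lam i) ≤ T ∧ ∀ i : ℕ+, n < i → γ i = 0} =
      simplexLatticePoints lam⁻¹ (Icc 1 n) T := by
  ext γ
  rw [Set.mem_ofPred_eq, ← support_subset_Icc_one_iff, and_comm]
  simp [simplexLatticePoints, Finsupp.weight_apply, Finsupp.sum, div_eq_mul_inv]

lemma prod_Icc_one_div_mul_coe {K : Type*} [Semifield K] (lam : ℕ+ → K) (c : K) (n : ℕ+) :
    ∏ i ∈ Icc 1 n, lam i / (c * (i : ℕ)) =
      c⁻¹ ^ #(Icc 1 n) / ((#(Icc 1 n))! * ∏ i ∈ Icc 1 n, lam⁻¹ i) := by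
  have hcard : #(Icc 1 n) = (n : ℕ) := by simp
  rw [hcard, ← prod_Icc_one_coe_eq_factorial, prod_div_distrib, prod_mul_distrib, prod_const, hcard]
  push_cast
  simp only [Pi.inv_apply, prod_inv_distrib, div_eq_mul_inv, mul_inv, inv_inv, inv_pow]
  ring

theorem lower_size_bound_of_S_general {K : Type*} [Field K] [LinearOrder K]
    [IsStrictOrderedRing K] [Archimedean K] (lam : ℕ+ → K) (n : ℕ+) (hpos : ∀ i ≤ n, 0 < lam i)
    (ε : K) (hε : 0 < ε) :
    {γ : MultiIndex | (∑ i ∈ γ.support, (γ i : K) / lam i) ≤ (ε ^ 2)⁻¹ ∧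
        ∀ i : ℕ+, n < i → γ i = 0}.Finite ∧
    (∏ i ∈ Icc (1 : ℕ+) n, lam i / (ε ^ 2 * (i : ℕ)))
      ≤ ({γ : MultiIndex | (∑ i ∈ γ.support, (γ i : K) / lam i) ≤ (ε ^ 2)⁻¹ ∧
          ∀ i : ℕ+, n < i → γ i = 0}.ncard : K) := by
  have hw : ∀ i ∈ Icc 1 n, 0 < lam⁻¹ i := fun i hi => inv_pos.mpr (hpos i (mem_Icc.mp hi).2)
  rw [setOf_sum_div_le_eq_simplexLatticePoints, prod_Icc_one_div_mul_coe]
  exact ⟨finite_simplexLatticePoints hw _,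
    pow_card_div_le_ncard_simplexLatticePoints hw (by positivity)⟩

/-- **Lower size bound for `S(ε, n)`.**  For a nonincreasing positive sequence
`λ`, `ε > 0` and `n ≥ 1`, the set
`S(ε, n) = {γ : ∑ γ_i / λ_i ≤ ε⁻², supp(γ) ⊂ [n]}` is finite and its
cardinality is at least `∏_{i=1}^n λ_i / (ε² i)`. -/
theorem lower_size_bound_of_S
    (lam : ℕ+ → ℝ) (hpos : ∀ i, 0 < lam i) (hanti : Antitone lam)
    (ε : ℝ) (hε : 0 < ε) (n : ℕ+) :
    {γ : MultiIndex | (∑ i ∈ γ.support, (γ i : ℝ) / lam i) ≤ (ε ^ 2)⁻¹ ∧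
        ∀ i : ℕ+, n < i → γ i = 0}.Finite ∧
    (∏ i ∈ Finset.Icc (1 : ℕ+) n, lam i / (ε ^ 2 * (i : ℝ)))
      ≤ ({γ : MultiIndex | (∑ i ∈ γ.support, (γ i : ℝ) / lam i) ≤ (ε ^ 2)⁻¹ ∧
          ∀ i : ℕ+, n < i → γ i = 0}.ncard : ℝ) :=
  lower_size_bound_of_S_general lam n (fun i _ => hpos i) ε hε
end

section
/- Let λ = (λ_i)_{i≥1} be a nonincreasing sequence of positive real numbers, let ε > 0, and let d ≥ 1 be an integer such that λ_i ≥ ε² for all 1 ≤ i ≤ d and λ_{d+1} < ε². Then the set S(ε) := {γ ∈ Γ : Σ_{i≥1} γ_i/λ_i ≤ ε^{−2}} is finite and its cardinality satisfies |S(ε)| ≤ (2·ε^{−2})^d · ∏_{i=1}^{d} λ_i. -/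
open Finset

/-! The inequality `∑ γ i / w i ≤ t` forces `γ i ≤ t * w i` for every `i`, so `γ` vanishes wherever
`t * w i < 1` and lies in a box with `⌊t * w i⌋ + 1` points in each remaining direction. Where
`1 ≤ t * w i`, this number of points is at most `2 * (t * w i)`. -/

section Sublevel

variable {ι K : Type*} [Field K] [LinearOrder K] [IsStrictOrderedRing K]
  {w : ι → K} {t : K} {s : Finset ι} {γ : ι →₀ ℕ}

/-- The set `S(ε)` of multi-indices over an arbitrary index type, for the sequence `w` in place of
`λ` and the level `t` in place of `ε⁻²`. -/
def multiIndexSublevel (w : ι → K) (t : K) : Set (ι →₀ ℕ) :=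
  {γ | ∑ i ∈ γ.support, (γ i : K) / w i ≤ t}

theorem apply_div_le_sum_support_div (hw : ∀ i, 0 ≤ w i) (γ : ι →₀ ℕ) (i : ι) :
    (γ i : K) / w i ≤ ∑ j ∈ γ.support, (γ j : K) / w j := by
  have hterm : ∀ j, 0 ≤ (γ j : K) / w j := fun j => div_nonneg (Nat.cast_nonneg _) (hw j)
  by_cases hi : i ∈ γ.support
  · exact single_le_sum (f := fun j => (γ j : K) / w j) (fun j _ => hterm j) hi
  · rw [Finsupp.notMem_support_iff.mp hi, Nat.cast_zero, zero_div]
    exact sum_nonneg fun j _ => hterm j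

theorem apply_le_of_mem_multiIndexSublevel (hw : ∀ i, 0 < w i) (hγ : γ ∈ multiIndexSublevel w t)
    (i : ι) : (γ i : K) ≤ t * w i :=
  (div_le_iff₀ (hw i)).mp ((apply_div_le_sum_support_div (fun j => (hw j).le) γ i).trans hγ)

theorem support_subset_of_mem_multiIndexSublevel (hw : ∀ i, 0 < w i)
    (hs : ∀ i ∉ s, t * w i < 1) (hγ : γ ∈ multiIndexSublevel w t) : γ.support ⊆ s := by
  intro i hi
  by_contra his
  have hlt : (γ i : K) < 1 := (apply_le_of_mem_multiIndexSublevel hw hγ i).trans_lt (hs i his)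
  exact Finsupp.mem_support_iff.mp hi (Nat.cast_lt_one.mp hlt)

variable [FloorSemiring K]

theorem multiIndexSublevel_subset_finsupp (hw : ∀ i, 0 < w i) (hs : ∀ i ∉ s, t * w i < 1) :
    multiIndexSublevel w t ⊆ s.finsupp fun i => Iic ⌊t * w i⌋₊ := fun _ hγ =>
  mem_coe.mpr <| mem_finsupp_iff.mpr
    ⟨support_subset_of_mem_multiIndexSublevel hw hs hγ, fun i _ =>
      mem_Iic.mpr (Nat.le_floor (apply_le_of_mem_multiIndexSublevel hw hγ i))⟩

theorem card_finsupp_Iic_floor_le {a : ι → K} (ha : ∀ i ∈ s, 1 ≤ a i) :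
    (#(s.finsupp fun i => Iic ⌊a i⌋₊) : K) ≤ ∏ i ∈ s, 2 * a i := by
  rw [card_finsupp, Nat.cast_prod]
  refine prod_le_prod (fun i _ => Nat.cast_nonneg _) fun i hi => ?_
  calc (#(Iic ⌊a i⌋₊) : K) = ⌊a i⌋₊ + 1 := by rw [Nat.card_Iic, Nat.cast_add_one]
    _ ≤ a i + a i := add_le_add (Nat.floor_le (zero_le_one.trans (ha i hi))) (ha i hi)
    _ = 2 * a i := (two_mul _).symm

theorem upper_size_bound_of_S_general (hw : ∀ i, 0 < w i) (hge : ∀ i ∈ s, 1 ≤ t * w i)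
    (hlt : ∀ i ∉ s, t * w i < 1) :
    (multiIndexSublevel w t).Finite ∧
      ((multiIndexSublevel w t).ncard : K) ≤ (2 * t) ^ #s * ∏ i ∈ s, w i := by
  have hsub := multiIndexSublevel_subset_finsupp hw hlt
  refine ⟨(finite_toSet _).subset hsub, ?_⟩
  calc ((multiIndexSublevel w t).ncard : K)
      ≤ #(s.finsupp fun i => Iic ⌊t * w i⌋₊) := by
        rw [← Set.ncard_coe_finset]
        exact Nat.cast_le.mpr (Set.ncard_le_ncard hsub (finite_toSet _))
    _ ≤ ∏ i ∈ s, 2 * (t * w i) := card_finsupp_Iic_floor_le hge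
    _ = (2 * t) ^ #s * ∏ i ∈ s, w i := by
        simp only [← mul_assoc, prod_mul_distrib, prod_const, mul_pow]

end Sublevel

theorem lt_of_notMem_Icc_one {α : Type*} [Preorder α] {f : ℕ+ → α} (hf : Antitone f) {d i : ℕ+}
    {c : α} (hd : f (d + 1) < c) (hi : i ∉ Icc 1 d) : f i < c := by
  have hdi : d < i := not_le.mp fun hid => hi (mem_Icc.mpr ⟨one_le, hid⟩)
  exact (hf (PNat.add_one_le_iff.mpr hdi)).trans_lt hd

/-- **Upper size bound for `S(ε)`.**  If `λ` is nonincreasing and positive with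
`λ_i ≥ ε²` for `i ≤ d` and `λ_{d+1} < ε²`, then
`S(ε) = {γ : ∑ γ_i / λ_i ≤ ε⁻²}` is finite and
`|S(ε)| ≤ (2 ε⁻²)^d ∏_{i=1}^d λ_i`. -/
theorem upper_size_bound_of_S
    (lam : ℕ+ → ℝ) (hpos : ∀ i, 0 < lam i) (hanti : Antitone lam)
    (ε : ℝ) (hε : 0 < ε) (d : ℕ+)
    (hge : ∀ i : ℕ+, i ≤ d → ε ^ 2 ≤ lam i) (hlt : lam (d + 1) < ε ^ 2) :
    {γ : MultiIndex | (∑ i ∈ γ.support, (γ i : ℝ) / lam i) ≤ (ε ^ 2)⁻¹}.Finite ∧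
    ({γ : MultiIndex | (∑ i ∈ γ.support, (γ i : ℝ) / lam i) ≤ (ε ^ 2)⁻¹}.ncard : ℝ)
      ≤ (2 * (ε ^ 2)⁻¹) ^ (d : ℕ) * ∏ i ∈ Finset.Icc (1 : ℕ+) d, lam i := by
  have hsq : 0 < ε ^ 2 := pow_pos hε 2
  have hcard : #(Icc 1 d) = (d : ℕ) := by rw [PNat.card_Icc, PNat.one_coe, Nat.add_sub_cancel]
  rw [← hcard]
  exact upper_size_bound_of_S_general hpos
    (fun i hi => (one_le_inv_mul₀ hsq).mpr (hge i (mem_Icc.mp hi).2))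
    (fun i hi => (inv_mul_lt_one₀ hsq).mpr (lt_of_notMem_Icc_one hanti hlt hi))
end

section
/- Let d ≥ 1 be an integer and γ, γ' ∈ ℕ_0^d two multi-indices. Then ∫_{ℝ^d} H̃_{γ,R,d}(x) · H̃_{γ',R,d}(x) dμ_d(x) → δ_{γ,γ'} as R → ∞, where δ_{γ,γ'} = 1 if γ = γ' and δ_{γ,γ'} = 0 otherwise, and μ_d is the d-fold product of the standard Gaussian measure N(0,1) on ℝ. -/
open Finset MeasureTheory ProbabilityTheory Filter

/-- The `n`-th normalized probabilist's Hermite polynomial: the monic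
probabilist's Hermite polynomial divided by `√(n!)`. -/
noncomputable def normHermite (n : ℕ) (x : ℝ) : ℝ :=
  (Polynomial.aeval x (Polynomial.hermite n)) / Real.sqrt (Nat.factorial n)

/-- The capped Hermite polynomial `H̃_{n,R}`. -/
noncomputable def cappedHermite (n : ℕ) (R : ℝ) (x : ℝ) : ℝ :=
  if x > R then normHermite n R
  else if x < -R then normHermite n (-R)
  else normHermite n x

/-! For `R ≥ 0`, capping at `R` is composition with the projection `clamp R` of `ℝ` onto
`[-R, R]`, which does not increase absolute values. Hence the integrand is dominated, uniformly
in `R`, by a polynomial in `|x|`, and in dimension one the integral tends to `∫ Hₙ Hₘ dμ₁`.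
By Stein's identity `∫ x f dμ₁ = ∫ f' dμ₁`, integrating against the monic `n`-th Hermite polynomial
amounts to differentiating `n` times and integrating, which gives orthonormality. The
`d`-dimensional integral is a product of one-dimensional ones. -/

section Clamp

/-- The projection of `x` onto the interval `[-R, R]`, used to express capping as composition.
Unlike `Set.projIcc` it is defined for every `R`; for `R < 0` it is the constant `-R`. -/
noncomputable def clamp (R x : ℝ) : ℝ := max (-R) (min x R)

lemma measurable_clamp (R : ℝ) : Measurable (clamp R) :=
  measurable_const.max (measurable_id.min measurable_const)

lemma clamp_of_abs_le {R x : ℝ} (h : |x| ≤ R) : clamp R x = x := by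
  rw [clamp, min_eq_left (abs_le.1 h).2, max_eq_right (abs_le.1 h).1]

lemma clamp_of_le {R x : ℝ} (hR : 0 ≤ R) (h : R ≤ x) : clamp R x = R := by
  rw [clamp, min_eq_right h, max_eq_right (neg_le_self hR)]

lemma clamp_of_le_neg {R x : ℝ} (h : x ≤ -R) : clamp R x = -R :=
  max_eq_left (min_le_of_left_le h)

lemma abs_clamp_le {R : ℝ} (hR : 0 ≤ R) (x : ℝ) : |clamp R x| ≤ |x| := by
  rcases le_total |x| R with h | h
  · rw [clamp_of_abs_le h]
  · refine le_trans ?_ h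
    exact abs_le.2 ⟨le_max_left _ _, max_le (neg_le_self hR) (min_le_right _ _)⟩

lemma tendsto_integral_comp_clamp {E : Type*} [NormedAddCommGroup E] [NormedSpace ℝ E]
    {μ : Measure ℝ} {f : ℝ → E} {g : ℝ → ℝ} (hf : StronglyMeasurable f)
    (hg : MonotoneOn g (Set.Ici 0)) (hfg : ∀ x, ‖f x‖ ≤ g |x|)
    (hg_int : Integrable (fun x ↦ g |x|) μ) :
    Tendsto (fun R ↦ ∫ x, f (clamp R x) ∂μ) atTop (nhds (∫ x, f x ∂μ)) := by
  refine tendsto_integral_filter_of_dominated_convergence (fun x ↦ g |x|) ?_ ?_ hg_int ?_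
  · exact .of_forall fun R ↦ (hf.comp_measurable (measurable_clamp R)).aestronglyMeasurable
  · filter_upwards [eventually_ge_atTop 0] with R hR
    exact .of_forall fun x ↦
      (hfg _).trans (hg (Set.mem_Ici.2 (abs_nonneg _)) (Set.mem_Ici.2 (abs_nonneg _))
        (abs_clamp_le hR x))
  · refine .of_forall fun x ↦ tendsto_const_nhds.congr' ?_
    filter_upwards [eventually_ge_atTop |x|] with R hR
    rw [clamp_of_abs_le hR]

end Clamp

section Polynomial

open Polynomial

lemma iterate_derivative_eq_C_of_natDegree_le {R : Type*} [Semiring R] {p : R[X]} {n : ℕ}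
    (hp : p.natDegree ≤ n) : derivative^[n] p = C (n.factorial • p.coeff n) := by
  have hdeg : (derivative^[n] p).natDegree = 0 := by
    have := natDegree_iterate_derivative p n
    omega
  rw [eq_C_of_natDegree_eq_zero hdeg, coeff_iterate_derivative, zero_add,
    Nat.descFactorial_self]

lemma abs_eval_le_sum_abs (p : ℝ[X]) (x : ℝ) :
    |p.eval x| ≤ ∑ k ∈ p.support, |p.coeff k| * |x| ^ k := by
  simpa only [eval_eq_sum, sum_def, abs_mul, abs_pow] using
    abs_sum_le_sum_abs (fun k ↦ p.coeff k * x ^ k) p.support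

variable {μ : Measure ℝ}

lemma integrable_eval_of_integrable_pow (hμ : ∀ k : ℕ, Integrable (fun x ↦ x ^ k) μ) (p : ℝ[X]) :
    Integrable (fun x ↦ p.eval x) μ := by
  simp only [eval_eq_sum, sum_def]
  exact integrable_finsetSum _ fun k _ ↦ (hμ k).const_mul _

lemma tendsto_integral_eval_clamp (hμ : ∀ k : ℕ, Integrable (fun x ↦ x ^ k) μ) (p : ℝ[X]) :
    Tendsto (fun R ↦ ∫ x, p.eval (clamp R x) ∂μ) atTop (nhds (∫ x, p.eval x ∂μ)) := by
  refine tendsto_integral_comp_clamp (g := fun t ↦ ∑ k ∈ p.support, |p.coeff k| * t ^ k)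
    p.continuous.stronglyMeasurable ?_ (abs_eval_le_sum_abs p) ?_
  · intro s hs t _ hst
    have : 0 ≤ s := hs
    dsimp only
    gcongr
  · refine integrable_finsetSum _ fun k _ ↦ Integrable.const_mul ?_ _
    simpa only [abs_pow] using (hμ k).abs

end Polynomial

section Gaussian

open scoped NNReal

variable (m : ℝ) (v : ℝ≥0)

lemma integrable_pow_gaussianReal (k : ℕ) : Integrable (fun x ↦ x ^ k) (gaussianReal m v) := by
  rw [← integrable_norm_iff (continuous_pow k).aestronglyMeasurable]
  simpa only [id_eq, norm_pow] using (memLp_id_gaussianReal (k : ℝ≥0)).integrable_norm_pow'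

lemma hasDerivAt_gaussianPDFReal (x : ℝ) :
    HasDerivAt (gaussianPDFReal m v) (-((x - m) / v) * gaussianPDFReal m v x) x := by
  have hexp : HasDerivAt (fun y ↦ -(y - m) ^ 2 / (2 * v)) (-((x - m) / v)) x := by
    refine ((((hasDerivAt_id x).sub_const m).pow 2).neg.div_const (2 * (v : ℝ))).congr_deriv ?_
    simp only [id_eq, Nat.cast_ofNat, Nat.add_one_sub_one, pow_one, mul_one, neg_div]
    rw [mul_div_mul_left _ _ two_ne_zero]
  refine (hexp.exp.const_mul (√(2 * Real.pi * v))⁻¹).congr_deriv ?_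
  rw [gaussianPDFReal]
  ring

variable {m v} {E : Type*} [NormedAddCommGroup E] [NormedSpace ℝ E]

lemma integrable_gaussianReal_iff (hv : v ≠ 0) {f : ℝ → E} :
    Integrable f (gaussianReal m v) ↔ Integrable fun x ↦ gaussianPDFReal m v x • f x := by
  rw [gaussianReal_of_var_ne_zero m hv, integrable_withDensity_iff_integrable_smul'
    (measurable_gaussianPDF m v) (.of_forall fun _ ↦ gaussianPDF_lt_top)]
  simp only [toReal_gaussianPDF]

theorem integral_sub_mean_smul_gaussianReal {f f' : ℝ → E} (hf : ∀ x, HasDerivAt f (f' x) x)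
    (hf_int : Integrable f (gaussianReal m v)) (hf'_int : Integrable f' (gaussianReal m v))
    (hmul : Integrable (fun x ↦ (x - m) • f x) (gaussianReal m v)) :
    ∫ x, (x - m) • f x ∂gaussianReal m v = (v : ℝ) • ∫ x, f' x ∂gaussianReal m v := by
  rcases eq_or_ne v 0 with rfl | hv
  · rw [gaussianReal_zero_var, NNReal.coe_zero, zero_smul]
    exact integral_eq_zero_of_ae (by simp [ae_dirac_eq, EventuallyEq])
  have hv' : (v : ℝ) ≠ 0 := by exact_mod_cast hv
  have hderiv (x : ℝ) : HasDerivAt (fun x ↦ gaussianPDFReal m v x • f x)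
      (gaussianPDFReal m v x • (f' x - (v : ℝ)⁻¹ • (x - m) • f x)) x := by
    refine ((hasDerivAt_gaussianPDFReal m v x).smul (hf x)).congr_deriv ?_
    module
  have hmul' : Integrable (fun x ↦ (v : ℝ)⁻¹ • (x - m) • f x) (gaussianReal m v) := hmul.smul _
  have hzero : ∫ x, (f' x - (v : ℝ)⁻¹ • (x - m) • f x) ∂gaussianReal m v = 0 := by
    rw [integral_gaussianReal_eq_integral_smul hv]
    exact integral_eq_zero_of_hasDerivAt_of_integrable hderiv
      ((integrable_gaussianReal_iff hv).1 (hf'_int.sub hmul'))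
      ((integrable_gaussianReal_iff hv).1 hf_int)
  rw [integral_sub hf'_int hmul', integral_smul, sub_eq_zero] at hzero
  rw [hzero, smul_inv_smul₀ hv']

end Gaussian

section Hermite

open Polynomial

lemma integral_X_mul_sub_derivative_gaussianReal (p : ℝ[X]) :
    ∫ x, (X * p - derivative p).eval x ∂gaussianReal 0 1 = 0 := by
  have hpoly := integrable_eval_of_integrable_pow (integrable_pow_gaussianReal 0 1)
  have hXp : Integrable (fun x ↦ x * p.eval x) (gaussianReal 0 1) :=
    (hpoly (X * p)).congr (.of_forall fun x ↦ by simp only [eval_mul, eval_X])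
  have hstein : ∫ x, x * p.eval x ∂gaussianReal 0 1 =
      ∫ x, (derivative p).eval x ∂gaussianReal 0 1 := by
    simpa using integral_sub_mean_smul_gaussianReal (m := 0) (v := 1) p.hasDerivAt (hpoly p)
      (hpoly (derivative p)) (by simpa using hXp)
  simp only [eval_sub, eval_mul, eval_X]
  rw [integral_sub hXp (hpoly _), hstein, sub_self]

/-- The monic probabilist's Hermite polynomial with real instead of integer coefficients, so that
it can be multiplied with arbitrary real polynomials. -/
noncomputable def realHermite (n : ℕ) : ℝ[X] := (hermite n).map (algebraMap ℤ ℝ)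

lemma realHermite_zero : realHermite 0 = 1 := by
  simp [realHermite]

lemma realHermite_succ (n : ℕ) :
    realHermite (n + 1) = X * realHermite n - derivative (realHermite n) := by
  simp [realHermite, hermite_succ]

lemma natDegree_realHermite (n : ℕ) : (realHermite n).natDegree = n := by
  rw [realHermite, (hermite_monic n).natDegree_map, natDegree_hermite]

lemma coeff_realHermite_self (n : ℕ) : (realHermite n).coeff n = 1 := by
  rw [realHermite, coeff_map, coeff_hermite_self, map_one]

lemma normHermite_eq_eval (n : ℕ) (x : ℝ) :
    normHermite n x = (C (√n.factorial)⁻¹ * realHermite n).eval x := by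
  rw [normHermite, realHermite, eval_C_mul, eval_map_algebraMap, div_eq_inv_mul]

lemma integral_realHermite_mul (n : ℕ) (p : ℝ[X]) :
    ∫ x, (realHermite n * p).eval x ∂gaussianReal 0 1 =
      ∫ x, (derivative^[n] p).eval x ∂gaussianReal 0 1 := by
  induction n generalizing p with
  | zero => rw [realHermite_zero, one_mul, Function.iterate_zero_apply]
  | succ n ih =>
    have hpoly := integrable_eval_of_integrable_pow (integrable_pow_gaussianReal 0 1)
    have hsucc : realHermite (n + 1) * p =
        (X * (realHermite n * p) - derivative (realHermite n * p)) +
          realHermite n * derivative p := by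
      rw [realHermite_succ, derivative_mul]
      ring
    simp only [hsucc, eval_add (p := X * _ - _)]
    rw [integral_add (hpoly _) (hpoly _), integral_X_mul_sub_derivative_gaussianReal, zero_add, ih,
      Function.iterate_succ_apply]

lemma integral_realHermite_mul_of_natDegree_le {n : ℕ} {p : ℝ[X]} (hp : p.natDegree ≤ n) :
    ∫ x, (realHermite n * p).eval x ∂gaussianReal 0 1 = n.factorial * p.coeff n := by
  rw [integral_realHermite_mul, iterate_derivative_eq_C_of_natDegree_le hp]
  simp

theorem integral_realHermite_mul_realHermite (n m : ℕ) :
    ∫ x, (realHermite n * realHermite m).eval x ∂gaussianReal 0 1 =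
      if n = m then (n.factorial : ℝ) else 0 := by
  wlog hmn : m ≤ n generalizing n m
  · rw [mul_comm, this m n (le_of_not_ge hmn), if_neg (by omega), if_neg (by omega)]
  rw [integral_realHermite_mul_of_natDegree_le ((natDegree_realHermite m).trans_le hmn)]
  split_ifs with h
  · rw [h, coeff_realHermite_self, mul_one]
  · rw [coeff_eq_zero_of_natDegree_lt (by rw [natDegree_realHermite]; omega), mul_zero]

theorem integral_normHermite_mul_normHermite (n m : ℕ) :
    ∫ x, normHermite n x * normHermite m x ∂gaussianReal 0 1 = if n = m then 1 else 0 := by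
  have hprod (x : ℝ) : normHermite n x * normHermite m x =
      (√n.factorial * √m.factorial)⁻¹ * (realHermite n * realHermite m).eval x := by
    simp only [normHermite_eq_eval, eval_mul, eval_C]
    ring
  simp only [hprod]
  rw [integral_const_mul, integral_realHermite_mul_realHermite]
  split_ifs with h
  · rw [← h, Real.mul_self_sqrt (Nat.cast_nonneg _), inv_mul_cancel₀ (by positivity)]
  · rw [mul_zero]

end Hermite

section CappedHermite

lemma cappedHermite_eq_normHermite_clamp (n : ℕ) {R : ℝ} (hR : 0 ≤ R) (x : ℝ) :
    cappedHermite n R x = normHermite n (clamp R x) := by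
  unfold cappedHermite
  split_ifs with hright hleft
  · rw [clamp_of_le hR hright.le]
  · rw [clamp_of_le_neg hleft.le]
  · rw [clamp_of_abs_le (abs_le.2 ⟨not_lt.1 hleft, not_lt.1 hright⟩)]

theorem tendsto_integral_cappedHermite_mul_cappedHermite (n m : ℕ) :
    Tendsto (fun R ↦ ∫ x, cappedHermite n R x * cappedHermite m R x ∂gaussianReal 0 1)
      atTop (nhds (if n = m then 1 else 0)) := by
  have hlim : Tendsto
      (fun R ↦ ∫ x, normHermite n (clamp R x) * normHermite m (clamp R x) ∂gaussianReal 0 1)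
      atTop (nhds (∫ x, normHermite n x * normHermite m x ∂gaussianReal 0 1)) := by
    simp only [normHermite_eq_eval, ← Polynomial.eval_mul]
    exact tendsto_integral_eval_clamp (integrable_pow_gaussianReal 0 1) _
  rw [← integral_normHermite_mul_normHermite]
  refine hlim.congr' ?_
  filter_upwards [eventually_ge_atTop 0] with R hR
  simp only [cappedHermite_eq_normHermite_clamp _ hR]

theorem cappedHermite_asymptotic_orthonormality_general {ι : Type*} [Fintype ι] (γ γ' : ι → ℕ) :
    Tendsto
      (fun R : ℝ ↦ ∫ x : ι → ℝ,
          (∏ i, cappedHermite (γ i) R (x i)) * (∏ i, cappedHermite (γ' i) R (x i))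
          ∂(Measure.pi fun _ : ι ↦ gaussianReal 0 1))
      atTop (nhds (if γ = γ' then (1 : ℝ) else 0)) := by
  have hfactor (R : ℝ) : ∫ x : ι → ℝ,
      (∏ i, cappedHermite (γ i) R (x i)) * (∏ i, cappedHermite (γ' i) R (x i))
        ∂(Measure.pi fun _ : ι ↦ gaussianReal 0 1) =
      ∏ i, ∫ x, cappedHermite (γ i) R x * cappedHermite (γ' i) R x ∂gaussianReal 0 1 := by
    simp only [← Finset.prod_mul_distrib]
    exact integral_fintype_prod_eq_prod
      fun i x ↦ cappedHermite (γ i) R x * cappedHermite (γ' i) R x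
  have hdelta : (if γ = γ' then (1 : ℝ) else 0) = ∏ i, if γ i = γ' i then (1 : ℝ) else 0 := by
    simp [Finset.prod_ite_zero, funext_iff]
  simp only [hfactor, hdelta]
  exact tendsto_finsetProd _ fun i _ ↦
    tendsto_integral_cappedHermite_mul_cappedHermite (γ i) (γ' i)

end CappedHermite

/-- **Asymptotic orthonormality of capped Hermite products.**  For multi-indices
`γ, γ' ∈ ℕ_0^d`, `∫_{ℝ^d} H̃_{γ,R,d} · H̃_{γ',R,d} dμ_d → δ_{γ,γ'}` as `R → ∞`,
where `μ_d` is the `d`-fold product of the standard Gaussian measure. -/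
theorem cappedHermite_asymptotic_orthonormality
    (d : ℕ) (hd : 1 ≤ d) (γ γ' : Fin d → ℕ) :
    Tendsto
      (fun R : ℝ => ∫ x : Fin d → ℝ,
          (∏ i, cappedHermite (γ i) R (x i)) * (∏ i, cappedHermite (γ' i) R (x i))
          ∂(Measure.pi fun _ : Fin d => gaussianReal 0 1))
      atTop (nhds (if γ = γ' then (1 : ℝ) else 0)) :=
  cappedHermite_asymptotic_orthonormality_general γ γ'
end
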